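/- arXiv:alg-geom/9610006 — 2 statements merged into one kernel-verified Lean document; each statement's English description precedes it below -/
import Mathlib

section
/- Let k be an infinite perfect field and let I, J ⊆ k[x_0,...,x_n] be homogeneous ideals with I unmixed radical of projective dimension d ≥ 0 and J Cohen–Macaulay of projective dimension e ≥ d. Then there exist homogeneous polynomials f_1,...,f_{e−d} ∈ I with deg f_j ≤ ((d+j)! · deg I)^{1/j} for each j, whose images in k[x_0,...,x_n]/J form a regular sequence. -/
open MvPolynomial

set_option synthInstance.maxHeartbeats 1000000
set_option maxHeartbeats 1000000

/-- Integer-valued binomial coefficient `C(a, b)`, zero when `a < 0` or `a < b`. -/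
def ichoose (a : ℤ) (b : ℕ) : ℤ := if a < 0 then 0 else (a.toNat).choose b

/-- The Hilbert function of a (homogeneous) ideal `I ⊆ k[x₀, …, xₙ]`:
`m ↦ dim_k (k[x₀, …, xₙ]/I)_m`. -/
noncomputable def hilbF (k : Type*) [Field k] {n : ℕ}
    (I : Ideal (MvPolynomial (Fin (n+1)) k)) (m : ℕ) : ℕ :=
  Module.finrank k ((homogeneousSubmodule (Fin (n+1)) k m).map
    (Ideal.Quotient.mkₐ k I).toLinearMap)

open scoped Classical in
/-- The Hilbert polynomial of `I` (the polynomial agreeing with the Hilbert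
function for all large `m`; junk value `0` if none exists). -/
noncomputable def hilbP (k : Type*) [Field k] {n : ℕ}
    (I : Ideal (MvPolynomial (Fin (n+1)) k)) : Polynomial ℚ :=
  if h : ∃ P : Polynomial ℚ, ∀ᶠ m : ℕ in Filter.atTop,
      (hilbF k I m : ℚ) = P.eval (m : ℚ) then h.choose else 0

/-- The (algebraic) degree of a homogeneous ideal `I` of projective dimension
`d ≥ 0`: `d! · (leading coefficient of its Hilbert polynomial)`. -/
noncomputable def idealDeg (k : Type*) [Field k] {n : ℕ}
    (I : Ideal (MvPolynomial (Fin (n+1)) k)) : ℕ :=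
  ⌊((hilbP k I).natDegree.factorial : ℚ) * (hilbP k I).leadingCoeff⌋₊

/-- The projective dimension of a homogeneous ideal `I` (of dimension `≥ 0`):
the degree of its Hilbert polynomial. -/
noncomputable def idealDim (k : Type*) [Field k] {n : ℕ}
    (I : Ideal (MvPolynomial (Fin (n+1)) k)) : ℕ :=
  (hilbP k I).natDegree

/-- A homogeneous ideal: one containing all homogeneous components of its elements. -/
def IsHomogeneousIdeal {k : Type*} [Field k] {n : ℕ}
    (I : Ideal (MvPolynomial (Fin (n+1)) k)) : Prop :=
  ∀ f ∈ I, ∀ m : ℕ, homogeneousComponent m f ∈ I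

/-- `I` is unmixed of projective dimension `d`: every associated prime `P` of
`k[x₀,…,xₙ]/I` satisfies `dim k[x₀,…,xₙ]/P = d + 1` (affine Krull dimension). -/
def IsUnmixed (k : Type*) [Field k] {n : ℕ}
    (I : Ideal (MvPolynomial (Fin (n+1)) k)) (d : ℕ) : Prop :=
  ∀ P ∈ associatedPrimes (MvPolynomial (Fin (n+1)) k)
      (MvPolynomial (Fin (n+1)) k ⧸ I),
    ringKrullDim (MvPolynomial (Fin (n+1)) k ⧸ P) = ((d + 1 : ℕ) : WithBot (WithTop ℕ))

/-- `J` is a (graded) Cohen--Macaulay homogeneous ideal of projective dimension `e`: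
there is a homogeneous system of parameters of length `e + 1` for `k[x₀,…,xₙ]/J`
which is a (weakly) regular sequence on it. -/
def IsCohenMacaulayOfDim (k : Type*) [Field k] {n : ℕ}
    (J : Ideal (MvPolynomial (Fin (n+1)) k)) (e : ℕ) : Prop :=
  J ≠ ⊤ ∧ ∃ g : Fin (e + 1) → MvPolynomial (Fin (n+1)) k,
    (∀ i, ∃ m : ℕ, 1 ≤ m ∧ (g i).IsHomogeneous m) ∧
    RingTheory.Sequence.IsWeaklyRegular (MvPolynomial (Fin (n+1)) k ⧸ J)
      (List.ofFn fun i => Ideal.Quotient.mk J (g i)) ∧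
    Ideal.span (Set.range (X : Fin (n+1) → MvPolynomial (Fin (n+1)) k)) ≤
      (J ⊔ Ideal.span (Set.range g)).radical

/-!
Let `D` be the rank of `k[x₀, …, xₙ] ⧸ I` over a linear Noether normalization `k[y₀, …, y_d]`.
Comparing leading coefficients of Hilbert polynomials gives `D ≤ deg I`, and the Hilbert function of
`I` is at most `D * C(m + d, d)` in *every* degree `m`: up to a common denominator `s`, an element
`f` of degree `m` has `D` polynomial coordinates; if their dehomogenizations all vanish to order
`m + 1` at a point where `s` does not vanish, then the coordinates of a high power of `f` vanish to
an order larger than their degree, so `f` is nilpotent, hence zero.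

If `k[x₀, …, xₙ] ⧸ J` has depth at least `r + 1`, each of its associated primes `P` has dimension at
least `r + 1`, so the Hilbert function of `P` is at least `C(m + r, r)`. As soon as this exceeds
`deg I * C(m + d, d)`, the ideal `I` contains a form of degree `m` outside `P`, and, `k` being
infinite, a form of degree `m` outside all these primes at once. Adding it to `J` lowers the depth
by at most one, and homogeneous regular sequences can be permuted.
-/

section RegularElements

open RingTheory.Sequence
open scoped Pointwise

variable {A : Type*} [CommRing A] {J : Ideal A} {f g h x : A}

theorem mem_sup_span_singleton_iff_sub_mul_mem :
    x ∈ J ⊔ Ideal.span {f} ↔ ∃ y, x - f * y ∈ J := by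
  rw [sup_comm, Ideal.mem_span_singleton_sup]
  constructor
  · rintro ⟨y, b, hb, rfl⟩
    exact ⟨y, by convert hb using 1; ring⟩
  · rintro ⟨y, hy⟩
    exact ⟨y, x - f * y, hy, by ring⟩

theorem isWeaklyRegular_quotient_cons_iff {l : List A} :
    IsWeaklyRegular (A ⧸ J) (f :: l) ↔
      IsSMulRegular (A ⧸ J) f ∧ IsWeaklyRegular (A ⧸ J ⊔ Ideal.span {f}) l := by
  have hmap : f • (⊤ : Submodule A (A ⧸ J)) = Submodule.map J.mkQ (Ideal.span {f}) := by
    rw [← Submodule.ideal_span_singleton_smul, ← Submodule.range_mkQ J,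
      ← Submodule.map_top, ← Submodule.map_smul'', smul_eq_mul, Ideal.mul_top]
  have e : QuotSMulTop f (A ⧸ J) ≃ₗ[A] A ⧸ J ⊔ Ideal.span {f} :=
    Submodule.quotEquivOfEq _ _ hmap ≪≫ₗ
      Submodule.quotientQuotientEquivQuotientSup J (Ideal.span {f})
  rw [isWeaklyRegular_cons_iff, e.isWeaklyRegular_congr]

theorem isSMulRegular_quotient_of_forall_associatedPrimes_notMem [IsNoetherianRing A]
    (hf : ∀ P ∈ associatedPrimes A (A ⧸ J), f ∉ P) : IsSMulRegular (A ⧸ J) f := by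
  have hcompl := biUnion_associatedPrimes_eq_compl_regular A (A ⧸ J)
  by_contra hreg
  obtain ⟨P, hP, hfP⟩ := Set.mem_iUnion₂.1 (hcompl.symm.subset hreg)
  exact hf P hP hfP

theorem mem_associatedPrimes_quotient_iff [IsNoetherianRing A] {P : Ideal A} :
    P ∈ associatedPrimes A (A ⧸ J) ↔ P.IsPrime ∧ ∃ x, ∀ a, a ∈ P ↔ a * x ∈ J := by
  have hcolon (x a : A) :
      a ∈ (⊥ : Submodule A (A ⧸ J)).colon {Ideal.Quotient.mk J x} ↔ a * x ∈ J := by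
    rw [Submodule.mem_colon_singleton, Submodule.mem_bot, ← Ideal.Quotient.eq_zero_iff_mem,
      map_mul, Algebra.smul_def, Ideal.Quotient.algebraMap_eq]
  simp only [AssociatedPrimes.mem_iff, isAssociatedPrime_iff, SetLike.ext_iff,
    Ideal.Quotient.mk_surjective.exists, hcolon]

theorem exists_associatedPrimes_quotient_of_notMem [IsNoetherianRing A] (hx : x ∉ J) :
    ∃ P ∈ associatedPrimes A (A ⧸ J), ∀ a, a * x ∈ J → a ∈ P := by
  obtain ⟨P, hP, hle⟩ := exists_le_isAssociatedPrime_of_isNoetherianRing A (Ideal.Quotient.mk J x)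
    (by rwa [Ne, Ideal.Quotient.eq_zero_iff_mem])
  refine ⟨P, hP, fun a ha => hle ?_⟩
  rwa [Submodule.mem_colon_singleton, Submodule.mem_bot, Algebra.smul_def,
    Ideal.Quotient.algebraMap_eq, ← map_mul, Ideal.Quotient.eq_zero_iff_mem]

theorem isSMulRegular_quotient_sup_swap (hf : IsSMulRegular (A ⧸ J) f)
    (hg : IsSMulRegular (A ⧸ J ⊔ Ideal.span {f}) g) :
    IsSMulRegular (A ⧸ J ⊔ Ideal.span {g}) f := by
  simp only [isSMulRegular_quotient_iff_mem_of_smul_mem, smul_eq_mul,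
    mem_sup_span_singleton_iff_sub_mul_mem] at hf hg ⊢
  rintro x ⟨y, hy⟩
  obtain ⟨z, hz⟩ := hg y ⟨x, by convert neg_mem hy using 1; ring⟩
  refine ⟨z, hf _ ?_⟩
  have hsplit : f * (x - g * z) = (f * x - g * y) + g * (y - f * z) := by ring
  exact hsplit ▸ add_mem hy (J.mul_mem_left g hz)

-- The relation `g * x ≡ f * y` modulo `J` turns an element `x` of `A ⧸ (J, f)` killed by `g` and
-- `h` into an element `y` of `A ⧸ (J, g)` killed by `h`.
theorem notMem_or_notMem_of_mem_associatedPrimes_quotient_sup [IsNoetherianRing A]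
    (hf : IsSMulRegular (A ⧸ J) f) (hg : IsSMulRegular (A ⧸ J) g)
    (hh : IsSMulRegular (A ⧸ J ⊔ Ideal.span {g}) h) {P : Ideal A}
    (hP : P ∈ associatedPrimes A (A ⧸ J ⊔ Ideal.span {f})) : g ∉ P ∨ h ∉ P := by
  by_contra! hmem
  obtain ⟨hPprime, x, hx⟩ := mem_associatedPrimes_quotient_iff.1 hP
  refine hPprime.ne_top ((Ideal.eq_top_iff_one P).2 ((hx 1).2 ?_))
  simp only [isSMulRegular_quotient_iff_mem_of_smul_mem, smul_eq_mul, one_mul,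
    mem_sup_span_singleton_iff_sub_mul_mem] at hf hg hh hx ⊢
  obtain ⟨y, hy⟩ := (hx g).1 hmem.1
  obtain ⟨w, hw⟩ := (hx h).1 hmem.2
  have hyw : f * (h * y - g * w) = g * (h * x - f * w) - h * (g * x - f * y) := by ring
  obtain ⟨z, hz⟩ := hh y ⟨w, hf _ (hyw ▸ sub_mem (J.mul_mem_left g hw) (J.mul_mem_left h hy))⟩
  have hxz : g * (x - f * z) = (g * x - f * y) + f * (y - g * z) := by ring
  exact ⟨z, hg _ (hxz ▸ add_mem hy (J.mul_mem_left f hz))⟩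

theorem notMem_of_mem_associatedPrimes_quotient [IsNoetherianRing A]
    (hf : IsSMulRegular (A ⧸ J) f) {P : Ideal A} (hP : P ∈ associatedPrimes A (A ⧸ J)) :
    f ∉ P := fun hfP =>
  (biUnion_associatedPrimes_eq_compl_regular A (A ⧸ J)).subset (Set.mem_biUnion hP hfP) hf

end RegularElements

theorem exists_mem_forall_notMem_of_infinite {k A : Type*} [Field k] [Infinite k] [CommRing A]
    [Algebra k A] (V : Submodule k A) {T : Set (Ideal A)} (hT : T.Finite)
    (hV : ∀ P ∈ T, ∃ v ∈ V, v ∉ P) : ∃ v ∈ V, ∀ P ∈ T, v ∉ P := by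
  by_contra! hcover
  have := hT.to_subtype
  obtain ⟨P, hP⟩ := Subspace.exists_eq_top_of_iUnion_eq_univ
    (p := fun P : T => (P.1.restrictScalars k).comap V.subtype) <| by
      refine Set.eq_univ_iff_forall.2 fun v => ?_
      obtain ⟨P, hP, hvP⟩ := hcover v v.2
      exact Set.mem_iUnion.2 ⟨⟨P, hP⟩, hvP⟩
  obtain ⟨v, hv, hvP⟩ := hV P P.2
  exact hvP (hP ▸ Submodule.mem_top : (⟨v, hv⟩ : V) ∈ _)

section GradedDepth

open RingTheory.Sequence

variable {A S : Type*} [CommRing A] [SetLike S A]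

/-- The graded ring `A ⧸ J` has depth at least `r`, witnessed by a weakly regular sequence of `r`
homogeneous elements of `A` of positive degree. -/
def GradedDepthGE (𝒜 : ℕ → S) (J : Ideal A) (r : ℕ) : Prop :=
  ∃ l : List A, l.length = r ∧ (∀ f ∈ l, ∃ m, 1 ≤ m ∧ f ∈ 𝒜 m) ∧ IsWeaklyRegular (A ⧸ J) l

theorem gradedDepthGE_zero (𝒜 : ℕ → S) (J : Ideal A) : GradedDepthGE 𝒜 J 0 :=
  ⟨[], rfl, by simp, .nil A _⟩

theorem gradedDepthGE_succ_iff {𝒜 : ℕ → S} {J : Ideal A} {r : ℕ} :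
    GradedDepthGE 𝒜 J (r + 1) ↔ ∃ g, (∃ m, 1 ≤ m ∧ g ∈ 𝒜 m) ∧ IsSMulRegular (A ⧸ J) g ∧
      GradedDepthGE 𝒜 (J ⊔ Ideal.span {g}) r := by
  constructor
  · rintro ⟨_ | ⟨g, l⟩, hlen, hdeg, hreg⟩
    · simp at hlen
    · rw [isWeaklyRegular_quotient_cons_iff] at hreg
      exact ⟨g, hdeg g (by simp), hreg.1, l, by simpa using hlen,
        fun f hf => hdeg f (by simp [hf]), hreg.2⟩
  · rintro ⟨g, hg, hgreg, l, hlen, hdeg, hreg⟩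
    exact ⟨g :: l, by simp [hlen], by simpa [hg] using hdeg,
      isWeaklyRegular_quotient_cons_iff.2 ⟨hgreg, hreg⟩⟩

variable {k : Type*} [Field k] [Infinite k] [Algebra k A] [IsNoetherianRing A]
  {𝒜 : ℕ → Submodule k A} [SetLike.GradedMonoid 𝒜]

theorem exists_isSMulRegular_quotient_sup_and_quotient_sup {J : Ideal A} {f g h : A} {δ ε : ℕ}
    (hgδ : g ∈ 𝒜 δ) (hhε : h ∈ 𝒜 ε) (hf : IsSMulRegular (A ⧸ J) f)
    (hg : IsSMulRegular (A ⧸ J) g) (hh : IsSMulRegular (A ⧸ J ⊔ Ideal.span {g}) h) :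
    ∃ c ∈ 𝒜 (δ * ε), IsSMulRegular (A ⧸ J ⊔ Ideal.span {f}) c ∧
      IsSMulRegular (A ⧸ J ⊔ Ideal.span {g}) c := by
  obtain ⟨c, hc, hcP⟩ := exists_mem_forall_notMem_of_infinite (𝒜 (δ * ε))
    ((associatedPrimes.finite A (A ⧸ J ⊔ Ideal.span {f})).union
      (associatedPrimes.finite A (A ⧸ J ⊔ Ideal.span {g}))) fun P hP => by
      have hPprime : P.IsPrime := hP.elim (·.isPrime) (·.isPrime)
      have hgh : g ∉ P ∨ h ∉ P := hP.elim
        (notMem_or_notMem_of_mem_associatedPrimes_quotient_sup hf hg hh)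
        fun hP => .inr (notMem_of_mem_associatedPrimes_quotient hh hP)
      rcases hgh with hgP | hhP
      · exact ⟨g ^ ε, mul_comm ε δ ▸ SetLike.pow_mem_graded ε hgδ,
          mt (hPprime.mem_of_pow_mem _) hgP⟩
      · exact ⟨h ^ δ, SetLike.pow_mem_graded δ hhε, mt (hPprime.mem_of_pow_mem _) hhP⟩
  exact ⟨c, hc,
    isSMulRegular_quotient_of_forall_associatedPrimes_notMem fun P hP => hcP P (.inl hP),
    isSMulRegular_quotient_of_forall_associatedPrimes_notMem fun P hP => hcP P (.inr hP)⟩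

theorem GradedDepthGE.sup_span_singleton {r : ℕ} {J : Ideal A} {f : A}
    (hJ : GradedDepthGE 𝒜 J (r + 1)) (hf : IsSMulRegular (A ⧸ J) f)
    (hfdeg : ∃ m, 1 ≤ m ∧ f ∈ 𝒜 m) : GradedDepthGE 𝒜 (J ⊔ Ideal.span {f}) r := by
  induction r generalizing J f with
  | zero => exact gradedDepthGE_zero 𝒜 _
  | succ r ih =>
    obtain ⟨g, ⟨δ, hδ, hgδ⟩, hg, hJg⟩ := gradedDepthGE_succ_iff.1 hJ
    obtain ⟨h, ⟨ε, hε, hhε⟩, hh, -⟩ := gradedDepthGE_succ_iff.1 hJg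
    obtain ⟨c, hc, hcf, hcg⟩ :=
      exists_isSMulRegular_quotient_sup_and_quotient_sup hgδ hhε hf hg hh
    have hcdeg : ∃ m, 1 ≤ m ∧ c ∈ 𝒜 m := ⟨δ * ε, Nat.mul_pos hδ hε, hc⟩
    have hJc : GradedDepthGE 𝒜 (J ⊔ Ideal.span {c}) (r + 1) :=
      gradedDepthGE_succ_iff.2 ⟨g, ⟨δ, hδ, hgδ⟩, isSMulRegular_quotient_sup_swap hg hcg,
        sup_right_comm J (Ideal.span {g}) _ ▸ ih hJg hcg hcdeg⟩
    exact gradedDepthGE_succ_iff.2 ⟨c, hcdeg, hcf, sup_right_comm J (Ideal.span {c}) _ ▸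
      ih hJc (isSMulRegular_quotient_sup_swap hf hcf) hfdeg⟩

end GradedDepth

section GradedSeparated

open RingTheory.Sequence DirectSum

variable {A S : Type*} [CommRing A] [SetLike S A] [AddSubmonoidClass S A] {𝒜 : ℕ → S}
  [GradedRing 𝒜] {J : Ideal A} {f x : A} {m : ℕ}

theorem mem_of_forall_exists_sub_pow_mul_mem (hJ : J.IsHomogeneous 𝒜) (hm : 1 ≤ m) (hf : f ∈ 𝒜 m)
    (hx : ∀ t : ℕ, ∃ y, x - f ^ t * y ∈ J) : x ∈ J := by
  classical
  rw [← sum_support_decompose 𝒜 x]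
  refine J.sum_mem fun i _ => ?_
  obtain ⟨y, hy⟩ := hx (i + 1)
  have hlow : (decompose 𝒜 (f ^ (i + 1) * y) i : A) = 0 :=
    coe_decompose_mul_of_left_mem_of_not_le 𝒜 (SetLike.pow_mem_graded (i + 1) hf)
      (by rw [smul_eq_mul]; nlinarith)
  have hxi : (decompose 𝒜 x i : A) = decompose 𝒜 (x - f ^ (i + 1) * y) i := by
    conv_lhs => rw [← sub_add_cancel x (f ^ (i + 1) * y), decompose_add]
    rw [DirectSum.add_apply, AddMemClass.coe_add, hlow, add_zero]
  exact hxi ▸ hJ i hy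

theorem exists_sub_pow_mul_mem_of_notMem (hJ : J.IsHomogeneous 𝒜) (hm : 1 ≤ m) (hf : f ∈ 𝒜 m)
    (hx : x ∉ J) : ∃ (t : ℕ) (y : A), x - f ^ t * y ∈ J ∧ y ∉ J ⊔ Ideal.span {f} := by
  by_contra! hdiv
  refine hx (mem_of_forall_exists_sub_pow_mul_mem hJ hm hf fun t => ?_)
  induction t with
  | zero => exact ⟨x, by simp⟩
  | succ t ih =>
    obtain ⟨y, hy⟩ := ih
    obtain ⟨z, hz⟩ := mem_sup_span_singleton_iff_sub_mul_mem.1 (hdiv t y hy)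
    have hsplit : x - f ^ (t + 1) * z = (x - f ^ t * y) + f ^ t * (y - f * z) := by ring
    exact ⟨z, hsplit ▸ add_mem hy (J.mul_mem_left _ hz)⟩

theorem exists_notMem_sup_and_forall_mul_mem (hJ : J.IsHomogeneous 𝒜) (hm : 1 ≤ m)
    (hf : f ∈ 𝒜 m) (hreg : IsSMulRegular (A ⧸ J) f) (hx : x ∉ J) :
    ∃ y ∉ J ⊔ Ideal.span {f}, ∀ a, a * x ∈ J → a * y ∈ J := by
  obtain ⟨t, y, hxy, hy⟩ := exists_sub_pow_mul_mem_of_notMem hJ hm hf hx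
  refine ⟨y, hy, fun a ha => mem_of_isSMulRegular_quotient_of_smul_mem (hreg.pow t) ?_⟩
  have hsplit : f ^ t * (a * y) = a * x - a * (x - f ^ t * y) := by ring
  exact (smul_eq_mul (f ^ t) (a * y)).symm ▸ hsplit ▸ sub_mem ha (J.mul_mem_left a hxy)

theorem isHomogeneous_sup_span_singleton (hJ : J.IsHomogeneous 𝒜) (hf : f ∈ 𝒜 m) :
    (J ⊔ Ideal.span {f}).IsHomogeneous 𝒜 :=
  hJ.sup (Ideal.homogeneous_span 𝒜 _ (by rintro _ rfl; exact ⟨m, hf⟩))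

theorem isSMulRegular_quotient_of_isSMulRegular_quotient_sup {g : A} (hJ : J.IsHomogeneous 𝒜)
    (hm : 1 ≤ m) (hfm : f ∈ 𝒜 m) (hf : IsSMulRegular (A ⧸ J) f)
    (hg : IsSMulRegular (A ⧸ J ⊔ Ideal.span {f}) g) : IsSMulRegular (A ⧸ J) g := by
  refine (isSMulRegular_quotient_iff_mem_of_smul_mem J g).2 fun x hx => ?_
  by_contra hxJ
  obtain ⟨y, hy, hann⟩ := exists_notMem_sup_and_forall_mul_mem hJ hm hfm hf hxJ
  exact hy (mem_of_isSMulRegular_quotient_of_smul_mem hg (Ideal.mem_sup_left (hann g hx)))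

theorem isWeaklyRegular_quotient_of_perm {l l' : List A} (hperm : l.Perm l')
    (hJ : J.IsHomogeneous 𝒜) (hl : ∀ f ∈ l, ∃ m, 1 ≤ m ∧ f ∈ 𝒜 m)
    (hreg : IsWeaklyRegular (A ⧸ J) l) : IsWeaklyRegular (A ⧸ J) l' := by
  induction hperm generalizing J with
  | nil => exact hreg
  | cons f _ ih =>
    obtain ⟨m, -, hf⟩ := hl f (by simp)
    rw [isWeaklyRegular_quotient_cons_iff] at hreg ⊢
    exact hreg.imp_right (ih (isHomogeneous_sup_span_singleton hJ hf) (by simp_all))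
  | swap f g l =>
    obtain ⟨m, hm, hg⟩ := hl g (by simp)
    simp only [isWeaklyRegular_quotient_cons_iff] at hreg ⊢
    obtain ⟨hgreg, hfreg, hlreg⟩ := hreg
    exact ⟨isSMulRegular_quotient_of_isSMulRegular_quotient_sup hJ hm hg hgreg hfreg,
      isSMulRegular_quotient_sup_swap hgreg hfreg, sup_right_comm J (Ideal.span {g}) _ ▸ hlreg⟩
  | trans hperm₁ _ ih₁ ih₂ => exact ih₂ hJ (fun f hf => hl f (hperm₁.mem_iff.2 hf)) (ih₁ hJ hl hreg)

theorem ringKrullDim_quotient_add_one_le {P Q : Ideal A} [P.IsPrime] (hPQ : P ≤ Q) (hfQ : f ∈ Q)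
    (hfP : f ∉ P) : ringKrullDim (A ⧸ Q) + 1 ≤ ringKrullDim (A ⧸ P) := by
  refine ringKrullDim_succ_le_of_surjective (Ideal.Quotient.factor hPQ)
    (Ideal.Quotient.factor_surjective hPQ) (r := Ideal.Quotient.mk P f) ?_ ?_
  · rwa [mem_nonZeroDivisors_iff_ne_zero, Ne, Ideal.Quotient.eq_zero_iff_mem]
  · rwa [Ideal.Quotient.factor_mk, Ideal.Quotient.eq_zero_iff_mem]

theorem GradedDepthGE.le_ringKrullDim_quotient [IsNoetherianRing A] {r : ℕ}
    (hJ : J.IsHomogeneous 𝒜) (hdepth : GradedDepthGE 𝒜 J r) {P : Ideal A}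
    (hP : P ∈ associatedPrimes A (A ⧸ J)) : (r : WithBot ℕ∞) ≤ ringKrullDim (A ⧸ P) := by
  induction r generalizing J P with
  | zero =>
    have := hP.isPrime
    exact_mod_cast ringKrullDim_nonneg_of_nontrivial (R := A ⧸ P)
  | succ r ih =>
    obtain ⟨g, ⟨m, hm, hgm⟩, hg, hJg⟩ := gradedDepthGE_succ_iff.1 hdepth
    obtain ⟨hPprime, x, hx⟩ := mem_associatedPrimes_quotient_iff.1 hP
    have hxJ : x ∉ J := fun hxJ =>
      hPprime.ne_top ((Ideal.eq_top_iff_one P).2 ((hx 1).2 (by simpa using hxJ)))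
    obtain ⟨y, hy, hann⟩ := exists_notMem_sup_and_forall_mul_mem hJ hm hgm hg hxJ
    obtain ⟨Q, hQ, hyQ⟩ := exists_associatedPrimes_quotient_of_notMem hy
    have hPQ : P ≤ Q := fun a ha => hyQ a (Ideal.mem_sup_left (hann a ((hx a).1 ha)))
    have hgQ : g ∈ Q := hyQ g (Ideal.mul_mem_right _ _
      (Ideal.mem_sup_right (Ideal.mem_span_singleton_self g)))
    calc ((r + 1 : ℕ) : WithBot ℕ∞) = r + 1 := by push_cast; rfl
      _ ≤ ringKrullDim (A ⧸ Q) + 1 := by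
        gcongr
        exact ih (isHomogeneous_sup_span_singleton hJ hgm) hJg hQ
      _ ≤ ringKrullDim (A ⧸ P) :=
        ringKrullDim_quotient_add_one_le hPQ hgQ (notMem_of_mem_associatedPrimes_quotient hg hP)

end GradedSeparated

theorem coe_decompose_sum {A S ι : Type*} [AddCommMonoid A] [SetLike S A] [AddSubmonoidClass S A]
    (𝒜 : ℕ → S) [DirectSum.Decomposition 𝒜] (s : Finset ι) (f : ι → A) (m : ℕ) :
    (DirectSum.decompose 𝒜 (∑ i ∈ s, f i) m : A) =
      ∑ i ∈ s, (DirectSum.decompose 𝒜 (f i) m : A) := by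
  rw [DirectSum.decompose_sum, DFinsupp.finsetSum_apply, AddSubmonoidClass.coe_finsetSum]

section QuotientGrading

open DirectSum

variable {k A : Type*} [CommRing k] [CommRing A] [Algebra k A]

/-- The images in `A ⧸ I` of the graded pieces of `A`. They are defined for every ideal `I`, and
form a grading of `A ⧸ I` when `I` is homogeneous. -/
def quotientGrading (𝒜 : ℕ → Submodule k A) (I : Ideal A) (m : ℕ) : Submodule k (A ⧸ I) :=
  (𝒜 m).map (Ideal.Quotient.mkₐ k I).toLinearMap

variable {𝒜 : ℕ → Submodule k A} {I : Ideal A}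

theorem mk_mem_quotientGrading {m : ℕ} {f : A} (hf : f ∈ 𝒜 m) :
    Ideal.Quotient.mk I f ∈ quotientGrading 𝒜 I m :=
  Submodule.mem_map_of_mem (f := (Ideal.Quotient.mkₐ k I).toLinearMap) hf

instance [SetLike.GradedMonoid 𝒜] : SetLike.GradedMonoid (quotientGrading 𝒜 I) where
  one_mem := mk_mem_quotientGrading SetLike.GradedOne.one_mem
  mul_mem := by
    rintro i j _ _ ⟨f, hf, rfl⟩ ⟨g, hg, rfl⟩
    exact mk_mem_quotientGrading (SetLike.GradedMul.mul_mem hf hg)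

instance {m : ℕ} [Module.Finite k (𝒜 m)] : Module.Finite k (quotientGrading 𝒜 I m) :=
  inferInstanceAs (Module.Finite k ((𝒜 m).map _))

theorem isInternal_quotientGrading [GradedAlgebra 𝒜] (hI : I.IsHomogeneous 𝒜) :
    IsInternal (quotientGrading 𝒜 I) := by
  classical
  refine ⟨(injective_iff_map_eq_zero _).2 fun x hx => ?_, fun a => ?_⟩
  · choose f hf hfx using fun i => (x i).2
    have hsum : ∑ i ∈ x.support, f i ∈ I := by
      rw [← Ideal.Quotient.eq_zero_iff_mem, map_sum, ← hx, coeAddMonoidHom_eq_dfinsuppSum,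
        DFinsupp.sum]
      exact Finset.sum_congr rfl fun i _ => hfx i
    refine DFinsupp.ext fun i => Subtype.ext ?_
    by_cases hi : i ∈ x.support
    · have hfi : (decompose 𝒜 (∑ j ∈ x.support, f j) i : A) = f i := by
        rw [coe_decompose_sum, Finset.sum_eq_single_of_mem i hi fun j _ hji =>
          decompose_of_mem_ne 𝒜 (hf j) hji, decompose_of_mem_same 𝒜 (hf i)]
      exact (hfx i).symm.trans (Ideal.Quotient.eq_zero_iff_mem.2 (hfi ▸ hI i hsum))
    · simpa using hi
  · obtain ⟨a, rfl⟩ := Ideal.Quotient.mk_surjective a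
    refine ⟨∑ i ∈ (decompose 𝒜 a).support,
      of (fun i => quotientGrading 𝒜 I i) i ⟨_, mk_mem_quotientGrading (decompose 𝒜 a i).2⟩, ?_⟩
    simp only [map_sum, coeAddMonoidHom_of]
    rw [← map_sum, sum_support_decompose]

/-- The grading of the quotient of a graded algebra by a homogeneous ideal. -/
noncomputable abbrev quotientGradedAlgebra [GradedAlgebra 𝒜] (hI : I.IsHomogeneous 𝒜) :
    GradedAlgebra (quotientGrading 𝒜 I) where
  __ := (isInternal_quotientGrading hI).chooseDecomposition

end QuotientGrading

theorem aeval_mem_graded_of_isHomogeneous {k A σ : Type*} [CommRing k] [CommRing A] [Algebra k A]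
    {𝒜 : ℕ → Submodule k A} [SetLike.GradedMonoid 𝒜] {z : σ → A} (hz : ∀ i, z i ∈ 𝒜 1)
    {p : MvPolynomial σ k} {m : ℕ} (hp : p.IsHomogeneous m) : aeval z p ∈ 𝒜 m := by
  rw [aeval_def, eval₂_eq]
  refine Submodule.sum_mem _ fun γ hγ => ?_
  rw [← Algebra.smul_def]
  refine Submodule.smul_mem _ _ ?_
  have hdeg : ∑ i ∈ γ.support, γ i • 1 = m := by
    simpa [Finsupp.weight_apply, Finsupp.sum] using hp (mem_support_iff.1 hγ)
  exact hdeg ▸ SetLike.prod_pow_mem_graded 𝒜 (fun _ => 1) z γ fun i _ => hz i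

instance {k σ : Type*} [CommRing k] [Finite σ] (m : ℕ) :
    Module.Finite k (homogeneousSubmodule σ k m) :=
  Module.Finite.iff_fg.2 (homogeneousSubmodule_fg σ k m)

theorem card_finsuppAntidiag_univ_fin_succ (r m : ℕ) :
    (Finset.univ.finsuppAntidiag m : Finset (Fin (r + 1) →₀ ℕ)).card = (m + r).choose r := by
  rw [Finset.card_finsuppAntidiag_nat_eq_choose, Finset.card_univ, Fintype.card_fin,
    Nat.add_right_comm, Nat.add_sub_cancel, Nat.add_comm r, Nat.choose_symm_add]

theorem finrank_homogeneousSubmodule_fin_succ (k : Type*) [Field k] (r m : ℕ) :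
    Module.finrank k (homogeneousSubmodule (Fin (r + 1)) k m) = (m + r).choose r := by
  classical
  have hsupp : {γ : Fin (r + 1) →₀ ℕ | γ.degree = m} =
      (Finset.univ.finsuppAntidiag m : Finset (Fin (r + 1) →₀ ℕ)) := by
    ext γ
    simp [Finset.mem_finsuppAntidiag, Finsupp.degree_eq_sum]
  rw [homogeneousSubmodule_eq_finsupp_supported, hsupp,
    (AddMonoidAlgebra.supportedEquivFinsupp _).finrank_eq, Module.finrank_finsupp_self,
    ← Nat.card_eq_fintype_card, Nat.card_coe_set_eq, Set.ncard_coe_finset,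
    card_finsuppAntidiag_univ_fin_succ]

theorem ringKrullDim_mvPolynomial_fin (k : Type*) [Field k] (r : ℕ) :
    ringKrullDim (MvPolynomial (Fin r) k) = r := by
  rw [MvPolynomial.ringKrullDim_of_isNoetherianRing, ringKrullDim_eq_zero_of_field, zero_add,
    Nat.card_fin]

theorem ringKrullDim_le_of_isIntegral {R T : Type*} [CommRing R] [CommRing T] (f : R →+* T)
    (hf : f.IsIntegral) : ringKrullDim T ≤ ringKrullDim R := by
  algebraize [f]
  exact Order.krullDim_le_of_strictMono (PrimeSpectrum.comap f) fun p q hpq =>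
    Ideal.IsIntegral.comap_lt_comap (R := R) (show p.asIdeal < q.asIdeal from hpq)

section TranscendenceDegree

variable {k A : Type*} [Field k] [CommRing A] [Algebra k A]

theorem natCast_le_trdeg_of_le_ringKrullDim [Nontrivial A] [Algebra.FiniteType k A] {r : ℕ}
    (hr : (r : WithBot ℕ∞) ≤ ringKrullDim A) : (r : Cardinal) ≤ Algebra.trdeg k A := by
  obtain ⟨s, g, hginj, hgfin⟩ := exists_finite_inj_algHom_of_fg k A
  have hdim : (r : WithBot ℕ∞) ≤ ringKrullDim (MvPolynomial (Fin s) k) :=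
    hr.trans (ringKrullDim_le_of_isIntegral g.toRingHom hgfin.to_isIntegral)
  have hrs : r ≤ s := by
    rw [ringKrullDim_mvPolynomial_fin] at hdim
    exact_mod_cast hdim
  have hindep : AlgebraicIndependent k (g ∘ X) := by
    rwa [algebraicIndependent_iff_injective_aeval, ← aeval_unique g]
  have hs := hindep.lift_cardinalMk_le_trdeg
  rw [Cardinal.mk_fin, Cardinal.lift_natCast, Cardinal.lift_uzero] at hs
  exact (Nat.cast_le.2 hrs).trans hs

theorem exists_algebraicIndependent_comp_of_le_ringKrullDim [IsDomain A] {ι : Type*} [Finite ι]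
    {x : ι → A} (hx : Algebra.adjoin k (Set.range x) = ⊤) {r : ℕ}
    (hr : (r : WithBot ℕ∞) ≤ ringKrullDim A) :
    ∃ i : Fin r → ι, AlgebraicIndependent k (x ∘ i) := by
  have : Algebra.FiniteType k A :=
    ⟨Subalgebra.fg_def.2 ⟨_, Set.finite_range x, hx⟩⟩
  have : Algebra.IsAlgebraic (Algebra.adjoin k (Set.range x)) A :=
    ⟨fun a => isAlgebraic_algebraMap (⟨a, hx ▸ Algebra.mem_top⟩ : Algebra.adjoin k (Set.range x))⟩
  obtain ⟨t, ht, hbasis⟩ := exists_isTranscendenceBasis_subset (R := k) (Set.range x)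
  have := ((Set.finite_range x).subset ht).fintype
  have hcard : r ≤ Fintype.card t := by
    have := natCast_le_trdeg_of_le_ringKrullDim (k := k) hr
    rw [← hbasis.cardinalMk_eq_trdeg, Cardinal.mk_fintype] at this
    exact_mod_cast this
  obtain ⟨e⟩ : Nonempty (Fin r ↪ t) := by
    rwa [Function.Embedding.nonempty_iff_card_le, Fintype.card_fin]
  choose i hi using fun j : Fin r => ht (e j).2
  exact ⟨i, (funext hi : x ∘ i = _) ▸ hbasis.1.comp e e.injective⟩

end TranscendenceDegree

section GradedPieces

variable {k A : Type*} [Field k] [CommRing A] [Algebra k A] {𝒜 : ℕ → Submodule k A}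
  [SetLike.GradedMonoid 𝒜]

theorem sum_choose_le_finrank_graded {r : ℕ} {ι : Type*} [Fintype ι] {z : Fin (r + 1) → A}
    (hz : ∀ i, z i ∈ 𝒜 1) {b : ι → A} {δ : ι → ℕ} (hb : ∀ i, b i ∈ 𝒜 (δ i))
    (hind : ∀ β : ι → MvPolynomial (Fin (r + 1)) k, ∑ i, aeval z (β i) * b i = 0 → β = 0)
    {m : ℕ} (hm : ∀ i, δ i ≤ m) [Module.Finite k (𝒜 m)] :
    ∑ i, (m - δ i + r).choose r ≤ Module.finrank k (𝒜 m) := by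
  let L : (∀ i, homogeneousSubmodule (Fin (r + 1)) k (m - δ i)) →ₗ[k] A :=
    ∑ i, LinearMap.mulRight k (b i) ∘ₗ (aeval z).toLinearMap ∘ₗ
      (homogeneousSubmodule (Fin (r + 1)) k (m - δ i)).subtype ∘ₗ LinearMap.proj i
  have hL (β) : L β = ∑ i, aeval z (β i).1 * b i := by simp [L]
  have hLm (β) : L β ∈ 𝒜 m := by
    rw [hL]
    refine Submodule.sum_mem _ fun i _ => ?_
    have hmem := SetLike.GradedMul.mul_mem (aeval_mem_graded_of_isHomogeneous hz (β i).2) (hb i)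
    rwa [Nat.sub_add_cancel (hm i)] at hmem
  have hinj : Function.Injective (L.codRestrict (𝒜 m) hLm) := by
    refine LinearMap.ker_eq_bot.1 (LinearMap.ker_eq_bot'.2 fun β hβ => ?_)
    have hβ0 := hind (fun i => (β i).1) (hL β ▸ congrArg Subtype.val hβ)
    exact funext fun i => Subtype.ext (congrFun hβ0 i)
  have hle := LinearMap.finrank_le_finrank_of_injective hinj
  simpa only [Module.finrank_pi_fintype, finrank_homogeneousSubmodule_fin_succ] using hle

theorem choose_le_finrank_graded_of_le_ringKrullDim [IsDomain A] {ι : Type*} [Finite ι]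
    {x : ι → A} (hx : Algebra.adjoin k (Set.range x) = ⊤) (hx₁ : ∀ i, x i ∈ 𝒜 1) {r : ℕ}
    (hr : ((r + 1 : ℕ) : WithBot ℕ∞) ≤ ringKrullDim A) (m : ℕ) [Module.Finite k (𝒜 m)] :
    (m + r).choose r ≤ Module.finrank k (𝒜 m) := by
  obtain ⟨i, hi⟩ := exists_algebraicIndependent_comp_of_le_ringKrullDim hx hr
  have hind (β : Unit → MvPolynomial (Fin (r + 1)) k)
      (hβ : ∑ u, aeval (x ∘ i) (β u) * 1 = 0) : β = 0 :=
    funext fun u => (algebraicIndependent_iff.1 hi) _ (by simpa using hβ)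
  simpa using sum_choose_le_finrank_graded (δ := fun _ => 0) (fun j => hx₁ (i j))
    (fun _ => SetLike.GradedOne.one_mem) hind fun _ => m.zero_le

end GradedPieces

theorem finrank_range_le_of_ker_le {k V V₁ V₂ : Type*} [Field k] [AddCommGroup V] [Module k V]
    [AddCommGroup V₁] [Module k V₁] [AddCommGroup V₂] [Module k V₂] [Module.Finite k V]
    {φ : V →ₗ[k] V₁} {ψ : V →ₗ[k] V₂} (h : LinearMap.ker φ ≤ LinearMap.ker ψ) :
    Module.finrank k (LinearMap.range ψ) ≤ Module.finrank k (LinearMap.range φ) := by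
  have hφ := LinearMap.finrank_range_add_finrank_ker φ
  have hψ := LinearMap.finrank_range_add_finrank_ker ψ
  have hker := Submodule.finrank_mono h
  omega

section HilbertFunction

variable {k : Type*} [Field k] {n : ℕ}

theorem choose_le_hilbF_of_isPrime {P : Ideal (MvPolynomial (Fin (n + 1)) k)} [P.IsPrime] {r : ℕ}
    (hr : ((r + 1 : ℕ) : WithBot ℕ∞) ≤ ringKrullDim (MvPolynomial (Fin (n + 1)) k ⧸ P)) (m : ℕ) :
    (m + r).choose r ≤ hilbF k P m := by
  have hgen : Algebra.adjoin k (Set.range fun i => Ideal.Quotient.mkₐ k P (X i)) = ⊤ := by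
    rw [Set.range_comp', Algebra.adjoin_image, adjoin_range_X, Algebra.map_top,
      (AlgHom.range_eq_top _).2 (Ideal.Quotient.mkₐ_surjective k P)]
  exact choose_le_finrank_graded_of_le_ringKrullDim
    (𝒜 := quotientGrading (homogeneousSubmodule (Fin (n + 1)) k) P) hgen
    (fun i => mk_mem_quotientGrading (isHomogeneous_X k i)) hr m

theorem exists_isHomogeneous_mem_notMem_of_hilbF_lt {I P : Ideal (MvPolynomial (Fin (n + 1)) k)}
    {m : ℕ} (hlt : hilbF k I m < hilbF k P m) : ∃ f ∈ I, f.IsHomogeneous m ∧ f ∉ P := by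
  by_contra! hIP
  let V := homogeneousSubmodule (Fin (n + 1)) k m
  let π (K : Ideal (MvPolynomial (Fin (n + 1)) k)) : V →ₗ[k] _ ⧸ K :=
    (Ideal.Quotient.mkₐ k K).toLinearMap ∘ₗ V.subtype
  have hrange (K) : hilbF k K m = Module.finrank k (LinearMap.range (π K)) := by
    rw [LinearMap.range_comp, Submodule.range_subtype, hilbF]
  have hmem (K) (v : V) : v ∈ LinearMap.ker (π K) ↔ v.1 ∈ K := Ideal.Quotient.eq_zero_iff_mem
  refine hlt.not_ge ?_
  rw [hrange, hrange]
  exact finrank_range_le_of_ker_le fun v hv => (hmem P v).2 (hIP v ((hmem I v).1 hv) v.2)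

end HilbertFunction

section HomogeneousPolynomials

variable {k : Type*} [Field k]

theorem eval_const_mul_of_isHomogeneous {R σ : Type*} [CommSemiring R] {p : MvPolynomial σ R}
    {N : ℕ} (hp : p.IsHomogeneous N) (c : R) (a : σ → R) :
    eval (fun i => c * a i) p = c ^ N * eval a p := by
  rw [eval_eq, eval_eq, Finset.mul_sum]
  refine Finset.sum_congr rfl fun γ hγ => ?_
  have hdeg : ∑ i ∈ γ.support, γ i = N := hp.degree_eq_sum_deg_support hγ ▸ rfl
  simp only [mul_pow, Finset.prod_mul_distrib, Finset.prod_pow_eq_pow_sum, hdeg]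
  ring

theorem exists_eval_cons_one_ne_zero [Infinite k] {r N : ℕ} {p : MvPolynomial (Fin (r + 1)) k}
    (hp : p.IsHomogeneous N) (hp0 : p ≠ 0) :
    ∃ b : Fin r → k, eval (Fin.cons 1 b : Fin (r + 1) → k) p ≠ 0 := by
  obtain ⟨a, ha⟩ : ∃ a, eval a (X 0 * p) ≠ 0 := by
    by_contra! hzero
    exact mul_ne_zero (X_ne_zero 0) hp0 (MvPolynomial.funext fun a => by rw [hzero, map_zero])
  rw [map_mul, eval_X] at ha
  have ha0 := left_ne_zero_of_mul ha
  have hscale : (Fin.cons 1 fun i => (a 0)⁻¹ * a i.succ : Fin (r + 1) → k) =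
      fun i => (a 0)⁻¹ * a i :=
    funext (Fin.cases (by simp [ha0]) (by simp))
  refine ⟨fun i => (a 0)⁻¹ * a i.succ, ?_⟩
  rw [hscale, eval_const_mul_of_isHomogeneous hp]
  exact mul_ne_zero (pow_ne_zero _ (inv_ne_zero ha0)) (right_ne_zero_of_mul ha)

theorem natDegree_prod_pow_le_and_coeff_eq {R ι : Type*} [CommRing R] {w : ι → Polynomial R}
    (hw : ∀ i, (w i).natDegree ≤ 1) (s : Finset ι) (γ : ι → ℕ) :
    (∏ i ∈ s, w i ^ γ i).natDegree ≤ ∑ i ∈ s, γ i ∧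
      (∏ i ∈ s, w i ^ γ i).coeff (∑ i ∈ s, γ i) = ∏ i ∈ s, (w i).coeff 1 ^ γ i := by
  classical
  induction s using Finset.induction_on with
  | empty => simp
  | insert i s hi ih =>
    have hdeg : (w i ^ γ i).natDegree ≤ γ i := by
      simpa using Polynomial.natDegree_pow_le_of_le (γ i) (hw i)
    have hcoeff : (w i ^ γ i).coeff (γ i) = (w i).coeff 1 ^ γ i := by
      simpa using Polynomial.coeff_pow_of_natDegree_le (m := γ i) (hw i)
    rw [Finset.prod_insert hi, Finset.sum_insert hi, Finset.prod_insert hi,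
      Polynomial.coeff_mul_add_eq_of_natDegree_le hdeg ih.1, hcoeff, ih.2]
    exact ⟨Polynomial.natDegree_mul_le.trans (add_le_add hdeg ih.1), rfl⟩

theorem natDegree_aeval_le_and_coeff_eq_of_isHomogeneous {K R σ : Type*} [CommRing K] [CommRing R]
    [Algebra K R] {w : σ → Polynomial R} (hw : ∀ i, (w i).natDegree ≤ 1) {p : MvPolynomial σ K}
    {N : ℕ} (hp : p.IsHomogeneous N) :
    (aeval w p).natDegree ≤ N ∧ (aeval w p).coeff N = aeval (fun i => (w i).coeff 1) p := by
  have hdeg (γ) (hγ : γ ∈ p.support) : ∑ i ∈ γ.support, γ i = N :=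
    hp.degree_eq_sum_deg_support hγ ▸ rfl
  have hterm (γ : σ →₀ ℕ) := natDegree_prod_pow_le_and_coeff_eq hw γ.support γ
  rw [aeval_def, eval₂_eq, aeval_def, eval₂_eq]
  simp only [IsScalarTower.algebraMap_apply K R (Polynomial R), Polynomial.algebraMap_eq]
  constructor
  · refine Polynomial.natDegree_sum_le_of_forall_le _ _ fun γ hγ => ?_
    exact (Polynomial.natDegree_C_mul_le _ _).trans (hdeg γ hγ ▸ (hterm γ).1)
  · rw [Polynomial.finsetSum_coeff]
    refine Finset.sum_congr rfl fun γ hγ => ?_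
    rw [Polynomial.coeff_C_mul, ← (hterm γ).2, hdeg γ hγ]

end HomogeneousPolynomials

section NoetherNormalization

variable {k A : Type*} [Field k] [CommRing A] [Algebra k A]

theorem isIntegral_of_forall_isIntegralElem {B σ : Type*} [CommRing B] [Algebra k B] {z : σ → A}
    (hz : (aeval z : MvPolynomial σ k →ₐ[k] A).toRingHom.IsIntegral) (g : B →ₐ[k] A)
    (hg : ∀ i, g.toRingHom.IsIntegralElem (z i)) : g.toRingHom.IsIntegral := by
  algebraize [g.toRingHom]
  have : IsScalarTower k B A := .of_algHom g
  have hmem (q : MvPolynomial σ k) : aeval z q ∈ integralClosure B A := by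
    have hle : (aeval z).range ≤ (integralClosure B A).restrictScalars k := by
      rw [← Algebra.adjoin_range_eq_range_aeval, Algebra.adjoin_le_iff]
      exact Set.range_subset_iff.2 hg
    exact hle ⟨q, rfl⟩
  have hclosure : (algebraMap (integralClosure B A) A).IsIntegral :=
    RingHom.IsIntegral.tower_top
      ((aeval z).toRingHom.codRestrict (integralClosure B A) hmem) _ hz
  exact fun x => isIntegral_trans (A := integralClosure B A) x (hclosure x)

theorem isIntegralElem_aeval_sub_smul {r N : ℕ} {z : Fin (r + 1) → A}
    {p : MvPolynomial (Fin (r + 1)) k} (hp : p.IsHomogeneous N) (hpz : aeval z p = 0)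
    {b : Fin r → k} (hb : eval (Fin.cons 1 b : Fin (r + 1) → k) p ≠ 0) :
    (aeval fun i => z i.succ - b i • z 0 : MvPolynomial (Fin r) k →ₐ[k] A).toRingHom.IsIntegralElem
      (z 0) := by
  set g : MvPolynomial (Fin r) k →ₐ[k] A := aeval fun i => z i.succ - b i • z 0 with hg
  let w : Fin (r + 1) → Polynomial (MvPolynomial (Fin r) k) :=
    Fin.cons Polynomial.X fun i => Polynomial.C (X i) + Polynomial.C (C (b i)) * Polynomial.X
  have hw : ∀ i, (w i).natDegree ≤ 1 :=
    Fin.cases Polynomial.natDegree_X_le fun i => by simp only [w, Fin.cons_succ]; compute_degree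
  have hw₁ : (fun i => (w i).coeff 1) =
      Algebra.ofId k (MvPolynomial (Fin r) k) ∘ (Fin.cons 1 b : Fin (r + 1) → k) :=
    funext (Fin.cases (by simp [w])
      fun i => by simp [w, Polynomial.coeff_C, Algebra.ofId_apply, algebraMap_eq])
  obtain ⟨hdeg, hcoeff⟩ := natDegree_aeval_le_and_coeff_eq_of_isHomogeneous hw hp
  algebraize [g.toRingHom]
  have : IsScalarTower k (MvPolynomial (Fin r) k) A := .of_algHom g
  have hroot : Polynomial.aeval (z 0) (aeval w p) = 0 := by
    let ev := (Polynomial.aeval (R := MvPolynomial (Fin r) k) (z 0)).restrictScalars k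
    have hev : (fun i => ev (w i)) = z := by
      refine funext (Fin.cases ?_ fun i => ?_)
      · simp [ev, w]
      · simp [ev, w, RingHom.algebraMap_toAlgebra, hg, Algebra.smul_def]
    conv_rhs => rw [← hpz, ← hev]
    exact comp_aeval_apply w ev p
  have hlead : (aeval w p).coeff N = C (eval (Fin.cons 1 b : Fin (r + 1) → k) p) := by
    rw [hcoeff, hw₁, ← coe_aeval_eq_eval]
    exact (comp_aeval_apply _ (Algebra.ofId k (MvPolynomial (Fin r) k)) p).symm
  refine ⟨Polynomial.C (C (eval (Fin.cons 1 b : Fin (r + 1) → k) p)⁻¹) * aeval w p, ?_, ?_⟩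
  · refine Polynomial.monic_of_natDegree_le_of_coeff_eq_one N
      ((Polynomial.natDegree_C_mul_le _ _).trans hdeg) ?_
    rw [Polynomial.coeff_C_mul, hlead, ← C_mul, inv_mul_cancel₀ hb, C_1]
  · exact (map_mul (Polynomial.aeval (z 0)) _ _).trans (by rw [hroot, mul_zero])

theorem exists_isIntegral_aeval_sub_smul [Infinite k] {r N : ℕ} {z : Fin (r + 1) → A}
    (hz : (aeval z : MvPolynomial _ k →ₐ[k] A).toRingHom.IsIntegral)
    {p : MvPolynomial (Fin (r + 1)) k} (hp : p.IsHomogeneous N) (hp0 : p ≠ 0)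
    (hpz : aeval z p = 0) :
    ∃ b : Fin r → k, (aeval fun i => z i.succ - b i • z 0 :
      MvPolynomial (Fin r) k →ₐ[k] A).toRingHom.IsIntegral := by
  obtain ⟨b, hb⟩ := exists_eval_cons_one_ne_zero hp hp0
  refine ⟨b, ?_⟩
  set g : MvPolynomial (Fin r) k →ₐ[k] A := aeval fun i => z i.succ - b i • z 0 with hg
  have hz0 : g.toRingHom.IsIntegralElem (z 0) := isIntegralElem_aeval_sub_smul hp hpz hb
  refine isIntegral_of_forall_isIntegralElem hz g (Fin.cases hz0 fun i => ?_)
  have hzi : z i.succ = g (X i) + g (C (b i)) * z 0 := by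
    rw [hg, aeval_X, aeval_C, ← Algebra.smul_def, sub_add_cancel]
  rw [hzi]
  exact (g.toRingHom.isIntegralElem_map (x := X i)).add _
    ((g.toRingHom.isIntegralElem_map (x := C (b i))).mul _ hz0)

section Graded

variable {𝒜 : ℕ → Submodule k A} [GradedAlgebra 𝒜]

theorem decompose_aeval {σ : Type*} {z : σ → A} (hz : ∀ i, z i ∈ 𝒜 1) (p : MvPolynomial σ k)
    (m : ℕ) : (DirectSum.decompose 𝒜 (aeval z p) m : A) = aeval z (homogeneousComponent m p) := by
  have hcomp (i : ℕ) : aeval z (homogeneousComponent i p) ∈ 𝒜 i :=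
    aeval_mem_graded_of_isHomogeneous hz (homogeneousComponent_isHomogeneous i p)
  conv_lhs => rw [← sum_homogeneousComponent p]
  rw [map_sum, coe_decompose_sum]
  by_cases hm : m ∈ Finset.range (p.totalDegree + 1)
  · rw [Finset.sum_eq_single_of_mem m hm fun i _ him =>
      DirectSum.decompose_of_mem_ne 𝒜 (hcomp i) him, DirectSum.decompose_of_mem_same 𝒜 (hcomp m)]
  · rw [homogeneousComponent_eq_zero m p (by simpa using hm), map_zero]
    exact Finset.sum_eq_zero fun i hi =>
      DirectSum.decompose_of_mem_ne 𝒜 (hcomp i) (ne_of_mem_of_not_mem hi hm)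

theorem exists_homogeneousComponent_ne_zero {R σ : Type*} [CommSemiring R] {p : MvPolynomial σ R}
    (hp : p ≠ 0) :
    ∃ m, homogeneousComponent m p ≠ 0 := by
  by_contra! hzero
  exact hp (by rw [← sum_homogeneousComponent p, Finset.sum_eq_zero fun i _ => hzero i])

theorem exists_algebraicIndependent_isIntegral_aeval [Infinite k] [Nontrivial A] {n : ℕ}
    {z : Fin n → A} (hz : ∀ i, z i ∈ 𝒜 1)
    (hint : (aeval z : MvPolynomial _ k →ₐ[k] A).toRingHom.IsIntegral) :
    ∃ (r : ℕ) (w : Fin r → A), (∀ i, w i ∈ 𝒜 1) ∧ AlgebraicIndependent k w ∧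
      (aeval w : MvPolynomial _ k →ₐ[k] A).toRingHom.IsIntegral := by
  induction n with
  | zero =>
    exact ⟨0, z, hz, (algebraicIndependent_empty_type_iff (R := k)).2
      (algebraMap k A).injective, hint⟩
  | succ r ih =>
    by_cases hind : AlgebraicIndependent k z
    · exact ⟨r + 1, z, hz, hind, hint⟩
    · rw [algebraicIndependent_iff] at hind
      push Not at hind
      obtain ⟨p, hpz, hp0⟩ := hind
      obtain ⟨m, hm⟩ := exists_homogeneousComponent_ne_zero hp0
      have hmz : aeval z (homogeneousComponent m p) = 0 := by
        rw [← decompose_aeval hz, hpz, DirectSum.decompose_zero, DirectSum.zero_apply,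
          ZeroMemClass.coe_zero]
      obtain ⟨b, hb⟩ := exists_isIntegral_aeval_sub_smul hint
        (homogeneousComponent_isHomogeneous m p) hm hmz
      exact ih (fun i => sub_mem (hz _) (Submodule.smul_mem _ _ (hz 0))) hb

end Graded

theorem injective_of_isIntegral_of_le_ringKrullDim {B T : Type*} [CommRing B] [IsDomain B]
    [CommRing T] {f : B →+* T} (hf : f.IsIntegral) {r : ℕ} (hB : ringKrullDim B = r)
    (hT : (r : WithBot ℕ∞) ≤ ringKrullDim T) : Function.Injective f := by
  refine (injective_iff_map_eq_zero f).2 fun s hfs => ?_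
  by_contra hs
  let g : B ⧸ Ideal.span {s} →+* T :=
    Ideal.Quotient.lift _ f ((RingHom.ker f).span_singleton_le_iff_mem.mpr hfs)
  have hg : g.IsIntegral := RingHom.IsIntegral.tower_top (Ideal.Quotient.mk (Ideal.span {s})) g hf
  have hlt : (r : WithBot ℕ∞) + 1 ≤ r :=
    calc (r : WithBot ℕ∞) + 1 ≤ ringKrullDim (B ⧸ Ideal.span {s}) + 1 :=
          add_le_add_left (hT.trans (ringKrullDim_le_of_isIntegral g hg)) 1
      _ ≤ ringKrullDim B :=
          ringKrullDim_quotient_succ_le_of_nonZeroDivisor (mem_nonZeroDivisors_of_ne_zero hs)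
      _ = r := hB
  exact absurd (by exact_mod_cast hlt) (Nat.not_succ_le_self r)

end NoetherNormalization

section HilbertPolynomial

theorem eventually_natCast_eval_pos {P : Polynomial ℚ} (hP : 0 < P.leadingCoeff) :
    ∀ᶠ m : ℕ in Filter.atTop, 0 < P.eval (m : ℚ) := by
  rcases le_or_gt P.degree 0 with hdeg | hdeg
  · rw [Polynomial.eq_C_of_degree_le_zero hdeg] at hP ⊢
    simp only [Polynomial.leadingCoeff_C, Polynomial.eval_C] at hP ⊢
    exact Filter.Eventually.of_forall fun _ => hP
  · exact ((P.tendsto_atTop_of_leadingCoeff_nonneg hdeg hP.le).comp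
      tendsto_natCast_atTop_atTop).eventually_gt_atTop 0

theorem coeff_le_coeff_of_eventually_eval_natCast_le {P Q : Polynomial ℚ} {r : ℕ}
    (hP : P.natDegree ≤ r) (hQ : Q.natDegree ≤ r)
    (hle : ∀ᶠ m : ℕ in Filter.atTop, Q.eval (m : ℚ) ≤ P.eval (m : ℚ)) :
    Q.coeff r ≤ P.coeff r := by
  by_contra! hlt
  have hcoeff : 0 < (Q - P).coeff r := by rwa [Polynomial.coeff_sub, sub_pos]
  have hdeg : (Q - P).natDegree = r :=
    le_antisymm ((Polynomial.natDegree_sub_le_of_le hQ hP).trans_eq (max_self r))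
      (Polynomial.le_natDegree_of_ne_zero hcoeff.ne')
  have hlead : 0 < (Q - P).leadingCoeff := by rwa [Polynomial.leadingCoeff, hdeg]
  obtain ⟨m, hm, hm'⟩ := (hle.and (eventually_natCast_eval_pos hlead)).exists
  rw [Polynomial.eval_sub] at hm'
  linarith

theorem card_le_factorial_mul_coeff_of_sum_choose_le {ι : Type*} [Fintype ι] (δ : ι → ℕ)
    {P : Polynomial ℚ} {r : ℕ} (hP : P.natDegree ≤ r)
    (hle : ∀ᶠ m : ℕ in Filter.atTop, ((∑ i, (m - δ i + r).choose r : ℕ) : ℚ) ≤ P.eval (m : ℚ)) :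
    (Fintype.card ι : ℚ) ≤ r.factorial * P.coeff r := by
  let Q : Polynomial ℚ := ∑ i, Polynomial.preHilbertPoly ℚ r (δ i)
  have hQdeg : Q.natDegree ≤ r := Polynomial.natDegree_sum_le_of_forall_le _ _ fun i _ =>
    (Polynomial.natDegree_preHilbertPoly ℚ r (δ i)).le
  have hQcoeff : Q.coeff r = Fintype.card ι * (r.factorial : ℚ)⁻¹ := by
    simp [Q, Polynomial.finsetSum_coeff, Polynomial.coeff_preHilbertPoly_self]
  have hQeval : ∀ᶠ m : ℕ in Filter.atTop, Q.eval (m : ℚ) ≤ P.eval (m : ℚ) := by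
    filter_upwards [hle, Filter.eventually_ge_atTop (∑ i, δ i)] with m hm hδ
    refine le_trans (le_of_eq ?_) hm
    rw [Polynomial.eval_finsetSum, Nat.cast_sum]
    exact Finset.sum_congr rfl fun i hi => Polynomial.preHilbertPoly_eq_choose_sub_add ℚ r
      ((Finset.single_le_sum (fun _ _ => Nat.zero_le _) hi).trans hδ)
  have hcoeff := coeff_le_coeff_of_eventually_eval_natCast_le hP hQdeg hQeval
  rwa [hQcoeff, mul_inv_le_iff₀ (by positivity), mul_comm] at hcoeff

variable {k : Type*} [Field k] {n : ℕ} {I : Ideal (MvPolynomial (Fin (n + 1)) k)}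

theorem eventually_hilbF_eq_eval_hilbP (hI : hilbP k I ≠ 0) :
    ∀ᶠ m : ℕ in Filter.atTop, (hilbF k I m : ℚ) = (hilbP k I).eval (m : ℚ) := by
  unfold hilbP at hI ⊢
  split_ifs at hI ⊢ with h
  · exact h.choose_spec
  · exact absurd rfl hI

theorem ne_top_of_hilbP_ne_zero (hI : hilbP k I ≠ 0) : I ≠ ⊤ := by
  rintro rfl
  have hzero (m : ℕ) : hilbF k (⊤ : Ideal (MvPolynomial (Fin (n + 1)) k)) m = 0 :=
    Module.finrank_zero_of_subsingleton
  refine hI (Polynomial.eq_zero_of_infinite_isRoot _ ?_)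
  obtain ⟨N, hN⟩ := Filter.eventually_atTop.1 (eventually_hilbF_eq_eval_hilbP hI)
  refine ((Set.Ici_infinite N).image (Nat.cast_injective (R := ℚ)).injOn).mono ?_
  rintro _ ⟨m, hm, rfl⟩
  exact (hN m hm).symm.trans (by rw [hzero, Nat.cast_zero])

attribute [local instance] MvPolynomial.gradedAlgebra

theorem isHomogeneous_of_isHomogeneousIdeal (hI : IsHomogeneousIdeal I) :
    I.IsHomogeneous (homogeneousSubmodule (Fin (n + 1)) k) := fun m f hf =>
  (decomposition.decompose'_apply f m).symm ▸ hI f hf m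

theorem le_idealDim_of_algebraicIndependent (hP : hilbP k I ≠ 0) {r : ℕ}
    {w : Fin (r + 1) → MvPolynomial (Fin (n + 1)) k ⧸ I}
    (hw : ∀ i, w i ∈ quotientGrading (homogeneousSubmodule (Fin (n + 1)) k) I 1)
    (hind : AlgebraicIndependent k w) : r ≤ idealDim k I := by
  by_contra! hlt
  have hunit (β : Unit → MvPolynomial (Fin (r + 1)) k) (hβ : ∑ u, aeval w (β u) * 1 = 0) : β = 0 :=
    funext fun u => (algebraicIndependent_iff.1 hind) _ (by simpa using hβ)
  have hgrowth : ∀ᶠ m : ℕ in Filter.atTop,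
      ((∑ _u : Unit, (m - 0 + r).choose r : ℕ) : ℚ) ≤ (hilbP k I).eval (m : ℚ) := by
    filter_upwards [eventually_hilbF_eq_eval_hilbP hP] with m hm
    rw [← hm, Nat.cast_le]
    exact sum_choose_le_finrank_graded hw (fun _ => SetLike.GradedOne.one_mem) hunit
      fun _ => m.zero_le
  have hcard := card_le_factorial_mul_coeff_of_sum_choose_le _ hlt.le hgrowth
  rw [Polynomial.coeff_eq_zero_of_natDegree_lt hlt, mul_zero, Fintype.card_unit] at hcard
  norm_num at hcard

theorem isSMulRegular_aeval_of_isUnmixed {d : ℕ} (hunm : IsUnmixed k I d)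
    {w : Fin (d + 1) → MvPolynomial (Fin (n + 1)) k ⧸ I}
    (hint : (aeval w : MvPolynomial _ k →ₐ[k] _).toRingHom.IsIntegral)
    {s : MvPolynomial (Fin (d + 1)) k} (hs : s ≠ 0) :
    IsSMulRegular (MvPolynomial (Fin (n + 1)) k ⧸ I) (aeval w s) := by
  obtain ⟨f, hf⟩ := Ideal.Quotient.mk_surjective (aeval w s)
  suffices hreg : IsSMulRegular (MvPolynomial (Fin (n + 1)) k ⧸ I) f by
    rw [← hf]
    exact hreg
  refine isSMulRegular_quotient_of_forall_associatedPrimes_notMem fun P hP hfP => hs ?_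
  have hIP : I ≤ P := fun a ha => ((mem_associatedPrimes_quotient_iff.1 hP).2.choose_spec a).2
    (I.mul_mem_right _ ha)
  have hcomp : ((Ideal.Quotient.factor hIP).comp
      (aeval w : MvPolynomial _ k →ₐ[k] _).toRingHom).IsIntegral :=
    hint.trans _ _ (RingHom.isIntegral_of_surjective _ (Ideal.Quotient.factor_surjective hIP))
  refine (injective_iff_map_eq_zero _).1 (injective_of_isIntegral_of_le_ringKrullDim hcomp
    (ringKrullDim_mvPolynomial_fin k (d + 1)) (hunm P hP).ge) s ?_
  change Ideal.Quotient.factor hIP (aeval w s) = 0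
  rwa [← hf, Ideal.Quotient.factor_mk, Ideal.Quotient.eq_zero_iff_mem]

theorem exists_isIntegral_aeval_of_isUnmixed [Infinite k] {d : ℕ} (hI : IsHomogeneousIdeal I)
    (hunm : IsUnmixed k I d) (hP : hilbP k I ≠ 0) (hdim : idealDim k I = d) :
    ∃ w : Fin (d + 1) → MvPolynomial (Fin (n + 1)) k ⧸ I,
      (∀ i, w i ∈ quotientGrading (homogeneousSubmodule (Fin (n + 1)) k) I 1) ∧
      (aeval w : MvPolynomial _ k →ₐ[k] _).toRingHom.IsIntegral := by
  let _ : GradedAlgebra (quotientGrading (homogeneousSubmodule (Fin (n + 1)) k) I) :=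
    quotientGradedAlgebra (isHomogeneous_of_isHomogeneousIdeal hI)
  have hI1 : (1 : MvPolynomial (Fin (n + 1)) k) ∉ I :=
    (Ideal.ne_top_iff_one I).1 (ne_top_of_hilbP_ne_zero hP)
  have : Nontrivial (MvPolynomial (Fin (n + 1)) k ⧸ I) :=
    Ideal.Quotient.nontrivial_iff.2 (ne_top_of_hilbP_ne_zero hP)
  have hmk : (aeval fun i => Ideal.Quotient.mk I (X i) : MvPolynomial (Fin (n + 1)) k →ₐ[k] _) =
      Ideal.Quotient.mkₐ k I := (aeval_unique (Ideal.Quotient.mkₐ k I)).symm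
  obtain ⟨r, w, hw, hind, hint⟩ := exists_algebraicIndependent_isIntegral_aeval
    (𝒜 := quotientGrading (homogeneousSubmodule (Fin (n + 1)) k) I)
    (fun i => mk_mem_quotientGrading (isHomogeneous_X k i))
    (hmk ▸ RingHom.isIntegral_of_surjective _ (Ideal.Quotient.mkₐ_surjective k I))
  obtain ⟨P, hPass, hPI⟩ := exists_associatedPrimes_quotient_of_notMem hI1
  have hdr : d + 1 ≤ r := by
    have hIP : I ≤ P := fun a ha => hPI a (by rwa [mul_one])
    have hle : ((d + 1 : ℕ) : WithBot ℕ∞) ≤ r :=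
      calc ((d + 1 : ℕ) : WithBot ℕ∞) = ringKrullDim (_ ⧸ P) := (hunm P hPass).symm
        _ ≤ ringKrullDim (_ ⧸ I) :=
          ringKrullDim_le_of_surjective _ (Ideal.Quotient.factor_surjective hIP)
        _ ≤ ringKrullDim (MvPolynomial (Fin r) k) := ringKrullDim_le_of_isIntegral _ hint
        _ = r := ringKrullDim_mvPolynomial_fin k r
    exact_mod_cast hle
  obtain ⟨r, rfl⟩ : ∃ r', r = r' + 1 := ⟨r - 1, by omega⟩
  obtain rfl : r = d := le_antisymm (hdim ▸ le_idealDim_of_algebraicIndependent hP hw hind)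
    (Nat.le_of_succ_le_succ hdr)
  exact ⟨w, hw, hint⟩

end HilbertPolynomial

section GenericBasis

theorem exists_smul_mem_span_image_of_maximal {B A ι : Type*} [CommRing B] [IsDomain B]
    [AddCommGroup A] [Module B A] {v : ι → A} (hv : Submodule.span B (Set.range v) = ⊤) {t : Set ι}
    (hmax : ∀ i ∉ t, ∃ c : B, c ≠ 0 ∧ c • v i ∈ Submodule.span B (v '' t)) (a : A) :
    ∃ c : B, c ≠ 0 ∧ c • a ∈ Submodule.span B (v '' t) := by
  have ha : a ∈ Submodule.span B (Set.range v) := hv ▸ Submodule.mem_top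
  induction ha using Submodule.span_induction with
  | mem x hx =>
    obtain ⟨i, rfl⟩ := hx
    by_cases hi : i ∈ t
    · exact ⟨1, one_ne_zero, by rw [one_smul]; exact Submodule.subset_span ⟨i, hi, rfl⟩⟩
    · exact hmax i hi
  | zero => exact ⟨1, one_ne_zero, by rw [smul_zero]; exact zero_mem _⟩
  | add x y _ _ hx hy =>
    obtain ⟨c, hc, hx⟩ := hx
    obtain ⟨c', hc', hy⟩ := hy
    refine ⟨c * c', mul_ne_zero hc hc', ?_⟩
    rw [smul_add, mul_smul c c' y, mul_comm, mul_smul]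
    exact add_mem (Submodule.smul_mem _ _ hx) (Submodule.smul_mem _ _ hy)
  | smul b x _ hx =>
    obtain ⟨c, hc, hx⟩ := hx
    exact ⟨c, hc, by rw [smul_comm]; exact Submodule.smul_mem _ _ hx⟩

theorem exists_linearIndepOn_forall_smul_mem_span {B A ι : Type*} [CommRing B] [IsDomain B]
    [IsNoetherianRing B] [AddCommGroup A] [Module B A] [Module.Finite B A] (v : ι → A)
    (hv : Submodule.span B (Set.range v) = ⊤) :
    ∃ t : Set ι, t.Finite ∧ LinearIndepOn B v t ∧ ∃ c : B, c ≠ 0 ∧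
      ∀ a : A, c • a ∈ Submodule.span B (v '' t) := by
  obtain ⟨t, ht, hmax⟩ := exists_maximal_linearIndepOn B v
  have hfin : Finite t := LinearIndependent.finite_of_isNoetherian ht
  have htorsion : Module.IsTorsion B (A ⧸ Submodule.span B (v '' t)) := fun x => by
    obtain ⟨a, rfl⟩ := Submodule.Quotient.mk_surjective _ x
    obtain ⟨c, hc, ha⟩ := exists_smul_mem_span_image_of_maximal hv hmax a
    exact ⟨⟨c, mem_nonZeroDivisors_of_ne_zero hc⟩, (Submodule.Quotient.mk_eq_zero _).2 ha⟩
  obtain ⟨c, hann, hc⟩ := Submodule.annihilator_top_inter_nonZeroDivisors htorsion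
  refine ⟨t, Set.toFinite t, ht, c, nonZeroDivisors.ne_zero hc, fun a => ?_⟩
  rw [← Submodule.Quotient.mk_eq_zero, Submodule.Quotient.mk_smul]
  exact Submodule.mem_annihilator.1 hann _ Submodule.mem_top

/-- The coordinates of `s • a` in the linearly independent family `b`. When the span of `b` contains
every `s • a`, they are, up to the common denominator `s`, the coordinates of `a` in the basis that
`b` becomes over the fraction field. -/
noncomputable def smulCoord {B A ι : Type*} [CommRing B] [AddCommGroup A] [Module B A] {b : ι → A}
    (hb : LinearIndependent B b) {s : B} (hs : ∀ a : A, s • a ∈ Submodule.span B (Set.range b)) :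
    A →ₗ[B] ι →₀ B :=
  hb.repr ∘ₗ (LinearMap.lsmul B A s).codRestrict _ hs

section

variable {B A ι : Type*} [CommRing B] [AddCommGroup A] [Module B A] [Fintype ι] {b : ι → A}
  (hb : LinearIndependent B b) {s : B} (hs : ∀ a : A, s • a ∈ Submodule.span B (Set.range b))

theorem sum_smulCoord_smul (a : A) : ∑ i, smulCoord hb hs a i • b i = s • a := by
  have h := hb.linearCombination_repr ⟨s • a, hs a⟩
  rwa [Finsupp.linearCombination_apply, Finsupp.sum_fintype _ _ fun i => zero_smul B (b i)] at h

theorem smulCoord_eq_of_sum_eq {a : A} {β : ι → B} (hβ : ∑ i, β i • b i = s • a) (i : ι) :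
    smulCoord hb hs a i = β i := by
  refine sub_eq_zero.1
    (Fintype.linearIndependent_iff.1 hb (fun i => smulCoord hb hs a i - β i) ?_ i)
  simp only [sub_smul, Finset.sum_sub_distrib, sum_smulCoord_smul, hβ, sub_self]

end

end GenericBasis

section HomogeneousBasis

variable {k A : Type*} [Field k] [CommRing A] [Algebra k A] {r : ℕ}
  [Algebra (MvPolynomial (Fin r) k) A] [IsScalarTower k (MvPolynomial (Fin r) k) A]
  {𝒜 : ℕ → Submodule k A} [GradedAlgebra 𝒜]

theorem decompose_smul_of_mem
    (hX : ∀ i, algebraMap (MvPolynomial (Fin r) k) A (X i) ∈ 𝒜 1) (p : MvPolynomial (Fin r) k)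
    {a : A} {j : ℕ} (ha : a ∈ 𝒜 j) (m : ℕ) :
    (DirectSum.decompose 𝒜 (p • a) m : A) =
      (if j ≤ m then homogeneousComponent (m - j) p else 0) • a := by
  have halg (q : MvPolynomial (Fin r) k) :
      algebraMap (MvPolynomial (Fin r) k) A q = aeval (fun i => algebraMap _ A (X i)) q :=
    DFunLike.congr_fun (aeval_unique (IsScalarTower.toAlgHom k (MvPolynomial (Fin r) k) A)) q
  rw [Algebra.smul_def, DirectSum.coe_decompose_mul_of_right_mem 𝒜 m ha, Algebra.smul_def]
  split_ifs
  · rw [halg, decompose_aeval hX, ← halg]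
  · rw [map_zero, zero_mul]

theorem exists_isHomogeneous_sum_smul_eq
    (hX : ∀ i, algebraMap (MvPolynomial (Fin r) k) A (X i) ∈ 𝒜 1) {ι : Type*} [Fintype ι]
    {b : ι → A} {δ : ι → ℕ} (hb : ∀ i, b i ∈ 𝒜 (δ i)) {c : MvPolynomial (Fin r) k} {a : A} {m : ℕ}
    (ha : a ∈ 𝒜 m) {β : ι → MvPolynomial (Fin r) k} (hβ : ∑ i, β i • b i = c • a) (ρ : ℕ) :
    ∃ β' : ι → MvPolynomial (Fin r) k, (∀ i, ∃ N ≤ m + ρ, (β' i).IsHomogeneous N) ∧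
      ∑ i, β' i • b i = homogeneousComponent ρ c • a := by
  refine ⟨fun i => if δ i ≤ m + ρ then homogeneousComponent (m + ρ - δ i) (β i) else 0,
    fun i => ?_, ?_⟩
  · dsimp only
    split_ifs
    · exact ⟨_, Nat.sub_le _ _, homogeneousComponent_isHomogeneous _ _⟩
    · exact ⟨_, le_rfl, isHomogeneous_zero _ _ _⟩
  · have hcomp := congrArg (fun x => (DirectSum.decompose 𝒜 x (m + ρ) : A)) hβ
    simpa only [coe_decompose_sum, decompose_smul_of_mem hX _ (hb _), decompose_smul_of_mem hX _ ha,
      if_pos (Nat.le_add_right m ρ), Nat.add_sub_cancel_left] using hcomp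

theorem exists_homogeneous_generic_basis [Module.Finite (MvPolynomial (Fin r) k) A]
    (hX : ∀ i, algebraMap (MvPolynomial (Fin r) k) A (X i) ∈ 𝒜 1) :
    ∃ (D : ℕ) (b : Fin D → A) (δ : Fin D → ℕ) (s : MvPolynomial (Fin r) k) (ρ : ℕ),
      (∀ i, b i ∈ 𝒜 (δ i)) ∧ LinearIndependent (MvPolynomial (Fin r) k) b ∧ s ≠ 0 ∧
      s.IsHomogeneous ρ ∧ ∀ a, s • a ∈ Submodule.span (MvPolynomial (Fin r) k) (Set.range b) := by
  classical
  let v : (Σ m, 𝒜 m) → A := fun a => a.2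
  have hv : Submodule.span (MvPolynomial (Fin r) k) (Set.range v) = ⊤ :=
    Submodule.eq_top_iff'.2 fun a => DirectSum.sum_support_decompose 𝒜 a ▸
      Submodule.sum_mem _ fun m _ => Submodule.subset_span ⟨⟨m, _⟩, rfl⟩
  obtain ⟨t, hfin, hind, c, hc0, hc⟩ := exists_linearIndepOn_forall_smul_mem_span v hv
  have := hfin.fintype
  let e : Fin (Fintype.card t) ≃ t := (Fintype.equivFin t).symm
  let b (i : Fin (Fintype.card t)) : A := v (e i)
  have hb (i) : b i ∈ 𝒜 (e i).1.1 := (e i).1.2.2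
  have hrange : v '' t = Set.range b := by
    rw [Set.image_eq_range, ← e.surjective.range_comp]
    rfl
  obtain ⟨ρ, hρ⟩ := exists_homogeneousComponent_ne_zero hc0
  refine ⟨_, b, _, homogeneousComponent ρ c, ρ, hb, hind.comp e e.injective, hρ,
    homogeneousComponent_isHomogeneous ρ c, fun a => ?_⟩
  rw [← DirectSum.sum_support_decompose 𝒜 a, Finset.smul_sum]
  refine Submodule.sum_mem _ fun m _ => ?_
  obtain ⟨β, hβ⟩ := (Submodule.mem_span_range_iff_exists_fun _).1 (hrange ▸ hc _)
  obtain ⟨β', -, hβ'⟩ := exists_isHomogeneous_sum_smul_eq hX hb (DirectSum.decompose 𝒜 a m).2 hβ ρ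
  exact (Submodule.mem_span_range_iff_exists_fun _).2 ⟨β', hβ'⟩

theorem exists_isHomogeneous_smulCoord
    (hX : ∀ i, algebraMap (MvPolynomial (Fin r) k) A (X i) ∈ 𝒜 1) {ι : Type*} [Finite ι]
    {b : ι → A} (hind : LinearIndependent (MvPolynomial (Fin r) k) b) {δ : ι → ℕ}
    (hb : ∀ i, b i ∈ 𝒜 (δ i)) {s : MvPolynomial (Fin r) k} {ρ : ℕ} (hρ : s.IsHomogeneous ρ)
    (hs : ∀ a, s • a ∈ Submodule.span (MvPolynomial (Fin r) k) (Set.range b)) {a : A} {m : ℕ}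
    (ha : a ∈ 𝒜 m) (i : ι) : ∃ N ≤ m + ρ, (smulCoord hind hs a i).IsHomogeneous N := by
  have := Fintype.ofFinite ι
  obtain ⟨β, hβ, hsum⟩ := exists_isHomogeneous_sum_smul_eq hX hb ha
    (sum_smulCoord_smul hind hs a) ρ
  rw [homogeneousComponent_of_mem hρ, if_pos rfl] at hsum
  exact smulCoord_eq_of_sum_eq hind hs hsum i ▸ hβ i

end HomogeneousBasis

theorem pow_mul_apply_pow_mem_pow {B A : Type*} [CommRing B] [CommRing A] [Algebra B A]
    {𝔞 : Ideal B} {s : B} {f : A} (hf : s • f ∈ 𝔞.map (algebraMap B A)) (φ : A →ₗ[B] B)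
    (N : ℕ) : s ^ N * φ (f ^ N) ∈ 𝔞 ^ N := by
  have hpow : s ^ N • f ^ N ∈ 𝔞 ^ N • (⊤ : Submodule B A) := by
    rw [Ideal.smul_top_eq_map, Submodule.restrictScalars_mem, Ideal.map_pow, ← smul_pow]
    exact Ideal.pow_mem_pow hf N
  have hmap : φ (s ^ N • f ^ N) ∈ 𝔞 ^ N • (⊤ : Submodule B A).map φ :=
    Submodule.map_smul'' (𝔞 ^ N) ⊤ φ ▸ Submodule.mem_map_of_mem hpow
  rw [φ.map_smul, smul_eq_mul] at hmap
  exact Ideal.mul_le_left hmap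

theorem mem_idealOfVars_iff_constantCoeff_eq_zero {σ R : Type*} [CommRing R]
    {p : MvPolynomial σ R} : p ∈ idealOfVars σ R ↔ constantCoeff p = 0 := by
  rw [← pow_one (idealOfVars σ R), mem_pow_idealOfVars_iff']
  refine ⟨fun h => h 0 (by simp), fun h γ hγ => ?_⟩
  rwa [(Finsupp.degree_eq_zero_iff γ).1 (Nat.lt_one_iff.1 hγ)]

theorem isMaximal_idealOfVars (σ k : Type*) [Field k] : (idealOfVars σ k).IsMaximal := by
  have hker : idealOfVars σ k = RingHom.ker (constantCoeff : MvPolynomial σ k →+* k) :=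
    Ideal.ext fun p => mem_idealOfVars_iff_constantCoeff_eq_zero
  exact hker ▸ RingHom.ker_isMaximal_of_surjective _ fun c => ⟨C c, constantCoeff_C σ c⟩

theorem totalDegree_aeval_le_of_forall_le_one {σ τ R : Type*} [CommRing R]
    {v : σ → MvPolynomial τ R} (hv : ∀ i, (v i).totalDegree ≤ 1) (p : MvPolynomial σ R) :
    (aeval v p).totalDegree ≤ p.totalDegree := by
  rw [aeval_def, eval₂_eq]
  refine totalDegree_finsetSum_le fun γ hγ => (totalDegree_mul _ _).trans ?_
  rw [MvPolynomial.algebraMap_eq, totalDegree_C, zero_add]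
  calc (∏ i ∈ γ.support, v i ^ γ i).totalDegree
      ≤ ∑ i ∈ γ.support, (v i ^ γ i).totalDegree := totalDegree_finsetProd _ _
    _ ≤ ∑ i ∈ γ.support, γ i := Finset.sum_le_sum fun i _ =>
        (totalDegree_pow _ _).trans (by simpa using Nat.mul_le_mul_left (γ i) (hv i))
    _ ≤ p.totalDegree := le_totalDegree hγ

section Dehomogenization

variable {k : Type*} [Field k] {d : ℕ}

/-- Dehomogenization in the chart where the zeroth variable is `1`, with coordinates centred at the
point `(1 : a 0 : … : a (d - 1))`. The order of vanishing of `p` at this point is the largest `M`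
for which `dehomogenizeAt a p` lies in `idealOfVars (Fin d) k ^ M`. -/
noncomputable def dehomogenizeAt (a : Fin d → k) :
    MvPolynomial (Fin (d + 1)) k →ₐ[k] MvPolynomial (Fin d) k :=
  aeval (Fin.cons 1 fun i => X i + C (a i))

theorem eval_dehomogenizeAt (a c : Fin d → k) (p : MvPolynomial (Fin (d + 1)) k) :
    eval c (dehomogenizeAt a p) = eval (Fin.cons 1 (c + a)) p := by
  have hcomp : (aeval c).comp (dehomogenizeAt a) = aeval (Fin.cons 1 (c + a) : Fin (d + 1) → k) :=
    MvPolynomial.algHom_ext fun i => by cases i using Fin.cases <;> simp [dehomogenizeAt]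
  exact DFunLike.congr_fun hcomp p

theorem totalDegree_dehomogenizeAt_le (a : Fin d → k) (p : MvPolynomial (Fin (d + 1)) k) :
    (dehomogenizeAt a p).totalDegree ≤ p.totalDegree := by
  refine totalDegree_aeval_le_of_forall_le_one (fun i => ?_) p
  cases i using Fin.cases with
  | zero => simp
  | succ i => simpa using totalDegree_add (X i) (C (a i))

theorem constantCoeff_dehomogenizeAt (a : Fin d → k) (p : MvPolynomial (Fin (d + 1)) k) :
    constantCoeff (dehomogenizeAt a p) = eval (Fin.cons 1 a) p := by
  rw [← zero_add a, ← eval_dehomogenizeAt, zero_add, eval_zero]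

theorem eq_zero_of_dehomogenizeAt_mem_pow [Infinite k] {N M : ℕ} (a : Fin d → k)
    {p : MvPolynomial (Fin (d + 1)) k} (hp : p.IsHomogeneous N) (hNM : N < M)
    (hmem : dehomogenizeAt a p ∈ idealOfVars (Fin d) k ^ M) : p = 0 := by
  have hdehom : dehomogenizeAt a p = 0 := by
    ext γ
    rcases lt_or_ge γ.degree M with hγ | hγ
    · exact (mem_pow_idealOfVars_iff' M _).1 hmem γ hγ
    · exact coeff_eq_zero_of_totalDegree_lt <|
        ((totalDegree_dehomogenizeAt_le a p).trans hp.totalDegree_le).trans_lt (hNM.trans_le hγ)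
  by_contra hp0
  obtain ⟨b, hb⟩ := exists_eval_cons_one_ne_zero hp hp0
  rw [← sub_add_cancel b a, ← eval_dehomogenizeAt, hdehom, map_zero] at hb
  exact hb rfl

end Dehomogenization

section UpperBound

variable {k A ι : Type*} [Field k] [Infinite k] [CommRing A] [Algebra k A] {d : ℕ}
  [Algebra (MvPolynomial (Fin (d + 1)) k) A] [IsScalarTower k (MvPolynomial (Fin (d + 1)) k) A]
  {𝒜 : ℕ → Submodule k A} [GradedAlgebra 𝒜] {b : ι → A} {δ : ι → ℕ}
  {s : MvPolynomial (Fin (d + 1)) k} {ρ : ℕ}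

-- Powers of `f` amplify the vanishing of its coordinates: those of `f ^ N` have degree at most
-- `N * m + ρ` but vanish to order `N * (m + 1)`, which for `N = ρ + 1` forces them to be zero.
theorem eq_zero_of_dehomogenizeAt_smulCoord_mem_pow [IsReduced A] [Finite ι]
    (hX : ∀ i, algebraMap (MvPolynomial (Fin (d + 1)) k) A (X i) ∈ 𝒜 1)
    (hind : LinearIndependent (MvPolynomial (Fin (d + 1)) k) b) (hb : ∀ i, b i ∈ 𝒜 (δ i))
    (hρ : s.IsHomogeneous ρ) (hreg : IsSMulRegular A s)
    (hs : ∀ f, s • f ∈ Submodule.span (MvPolynomial (Fin (d + 1)) k) (Set.range b))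
    {a : Fin d → k} (ha : eval (Fin.cons 1 a) s ≠ 0) {m : ℕ} {f : A} (hf : f ∈ 𝒜 m)
    (hvan : ∀ i, dehomogenizeAt a (smulCoord hind hs f i) ∈ idealOfVars (Fin d) k ^ (m + 1)) :
    f = 0 := by
  have := Fintype.ofFinite ι
  have hmax := isMaximal_idealOfVars (Fin d) k
  let 𝔞 := (idealOfVars (Fin d) k ^ (m + 1)).comap (dehomogenizeAt a)
  have hsf : s • f ∈ 𝔞.map (algebraMap (MvPolynomial (Fin (d + 1)) k) A) := by
    rw [← sum_smulCoord_smul hind hs f]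
    refine Ideal.sum_mem _ fun i _ => ?_
    rw [Algebra.smul_def]
    exact Ideal.mul_mem_right _ _ (Ideal.mem_map_of_mem _ (hvan i))
  have hcoord (i : ι) : smulCoord hind hs (f ^ (ρ + 1)) i = 0 := by
    obtain ⟨N, hN, hhom⟩ := exists_isHomogeneous_smulCoord hX hind hb hρ hs
      (SetLike.pow_mem_graded (ρ + 1) hf) i
    refine eq_zero_of_dehomogenizeAt_mem_pow a hhom (M := (m + 1) * (ρ + 1)) ?_ ?_
    · rw [smul_eq_mul] at hN
      linarith
    · have hmem := Ideal.le_comap_pow (dehomogenizeAt a) (ρ + 1)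
        (pow_mul_apply_pow_mem_pow hsf (Finsupp.lapply i ∘ₗ smulCoord hind hs) (ρ + 1))
      rw [← pow_mul, Ideal.mem_comap, map_mul, map_pow] at hmem
      refine (Ideal.IsMaximal.mul_mem_pow _ hmem).resolve_left fun hmem => ha ?_
      rw [← constantCoeff_dehomogenizeAt]
      exact mem_idealOfVars_iff_constantCoeff_eq_zero.1 (hmax.isPrime.mem_of_pow_mem _ hmem)
  refine eq_zero_of_pow_eq_zero (n := ρ + 1) (hreg.right_eq_zero_of_smul ?_)
  rw [← sum_smulCoord_smul hind hs, Finset.sum_eq_zero fun i _ => by rw [hcoord, zero_smul]]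

theorem exists_mem_finsuppAntidiag_tail_eq {m : ℕ} {γ : Fin d →₀ ℕ} (hγ : γ.degree ≤ m) :
    ∃ γ' ∈ (Finset.univ.finsuppAntidiag m : Finset (Fin (d + 1) →₀ ℕ)), γ'.tail = γ := by
  refine ⟨γ.cons (m - γ.degree), ?_, Finsupp.tail_cons _ _⟩
  rw [Finset.mem_finsuppAntidiag, Fin.sum_univ_succ]
  simp only [Finsupp.cons_zero, Finsupp.cons_succ, ← Finsupp.degree_eq_sum]
  exact ⟨Nat.sub_add_cancel hγ, Finset.subset_univ _⟩

theorem finrank_graded_le_card_mul_choose [IsReduced A] [Fintype ι]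
    (hX : ∀ i, algebraMap (MvPolynomial (Fin (d + 1)) k) A (X i) ∈ 𝒜 1)
    (hind : LinearIndependent (MvPolynomial (Fin (d + 1)) k) b) (hb : ∀ i, b i ∈ 𝒜 (δ i))
    (hρ : s.IsHomogeneous ρ) (hs0 : s ≠ 0) (hreg : IsSMulRegular A s)
    (hs : ∀ f, s • f ∈ Submodule.span (MvPolynomial (Fin (d + 1)) k) (Set.range b)) (m : ℕ) :
    Module.finrank k (𝒜 m) ≤ Fintype.card ι * (m + d).choose d := by
  obtain ⟨a, ha⟩ := exists_eval_cons_one_ne_zero hρ hs0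
  let Γ : Finset (Fin (d + 1) →₀ ℕ) := Finset.univ.finsuppAntidiag m
  let taylor : 𝒜 m →ₗ[k] ι × Γ → k := LinearMap.pi fun x =>
    lcoeff k x.2.1.tail ∘ₗ (dehomogenizeAt a).toLinearMap ∘ₗ
      (Finsupp.lapply x.1 ∘ₗ smulCoord hind hs).restrictScalars k ∘ₗ (𝒜 m).subtype
  have hinj : Function.Injective taylor := by
    refine (injective_iff_map_eq_zero taylor).2 fun f hf => Subtype.ext ?_
    refine eq_zero_of_dehomogenizeAt_smulCoord_mem_pow hX hind hb hρ hreg hs ha f.2 fun i => ?_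
    refine (mem_pow_idealOfVars_iff' _ _).2 fun γ hγ => ?_
    obtain ⟨γ', hγ', rfl⟩ := exists_mem_finsuppAntidiag_tail_eq (Nat.lt_succ_iff.1 hγ)
    exact congrFun hf (i, ⟨γ', hγ'⟩)
  calc Module.finrank k (𝒜 m)
      ≤ Module.finrank k (ι × Γ → k) := LinearMap.finrank_le_finrank_of_injective hinj
    _ = Fintype.card ι * (m + d).choose d := by
      rw [Module.finrank_fintype_fun_eq_card, Fintype.card_prod, Fintype.card_coe,
        card_finsuppAntidiag_univ_fin_succ]

end UpperBound

section HilbertFunctionBounds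

theorem exists_finrank_graded_bounds {k A : Type*} [Field k] [Infinite k] [CommRing A]
    [Nontrivial A] [IsReduced A] [Algebra k A] [Algebra.FiniteType k A] {𝒜 : ℕ → Submodule k A}
    [GradedAlgebra 𝒜] [∀ m, Module.Finite k (𝒜 m)] {d : ℕ} {w : Fin (d + 1) → A}
    (hw : ∀ i, w i ∈ 𝒜 1) (hint : (aeval w : MvPolynomial _ k →ₐ[k] A).toRingHom.IsIntegral)
    (hreg : ∀ s : MvPolynomial (Fin (d + 1)) k, s ≠ 0 → IsSMulRegular A (aeval w s)) :
    ∃ (D : ℕ) (δ : Fin D → ℕ), 1 ≤ D ∧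
      (∀ m, (∀ i, δ i ≤ m) → ∑ i, (m - δ i + d).choose d ≤ Module.finrank k (𝒜 m)) ∧
      ∀ m, Module.finrank k (𝒜 m) ≤ D * (m + d).choose d := by
  let _ : Algebra (MvPolynomial (Fin (d + 1)) k) A :=
    (aeval w : MvPolynomial _ k →ₐ[k] A).toRingHom.toAlgebra
  have : IsScalarTower k (MvPolynomial (Fin (d + 1)) k) A := .of_algHom (aeval w)
  have : Algebra.IsIntegral (MvPolynomial (Fin (d + 1)) k) A := ⟨hint⟩
  have : Algebra.FiniteType (MvPolynomial (Fin (d + 1)) k) A :=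
    .of_restrictScalars_finiteType k _ _
  have : Module.Finite (MvPolynomial (Fin (d + 1)) k) A := Algebra.IsIntegral.finite
  have hX (i : Fin (d + 1)) : algebraMap (MvPolynomial (Fin (d + 1)) k) A (X i) ∈ 𝒜 1 :=
    Set.mem_of_eq_of_mem (aeval_X w i) (hw i)
  obtain ⟨D, b, δ, s, ρ, hb, hind, hs0, hρ, hs⟩ := exists_homogeneous_generic_basis hX
  refine ⟨D, δ, Nat.one_le_iff_ne_zero.2 ?_, fun m hm => ?_, fun m => ?_⟩
  · rintro rfl
    have hs1 := hs 1
    rw [Set.range_eq_empty, Submodule.span_empty, Submodule.mem_bot] at hs1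
    exact one_ne_zero ((hreg s hs0).right_eq_zero_of_smul hs1)
  · exact sum_choose_le_finrank_graded hw hb
      (fun β hβ => funext (Fintype.linearIndependent_iff.1 hind β hβ)) hm
  · simpa only [Fintype.card_fin] using
      finrank_graded_le_card_mul_choose hX hind hb hρ hs0 (hreg s hs0) hs m

variable {k : Type*} [Field k] {n d : ℕ} {I : Ideal (MvPolynomial (Fin (n + 1)) k)}

attribute [local instance] MvPolynomial.gradedAlgebra

theorem exists_hilbF_bounds [Infinite k] (hI : IsHomogeneousIdeal I) (hrad : I.IsRadical)
    (hunm : IsUnmixed k I d) (hP : hilbP k I ≠ 0) (hdim : idealDim k I = d) :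
    ∃ (D : ℕ) (δ : Fin D → ℕ), 1 ≤ D ∧
      (∀ m, (∀ i, δ i ≤ m) → ∑ i, (m - δ i + d).choose d ≤ hilbF k I m) ∧
      ∀ m, hilbF k I m ≤ D * (m + d).choose d := by
  obtain ⟨w, hw, hint⟩ := exists_isIntegral_aeval_of_isUnmixed hI hunm hP hdim
  let _ : GradedAlgebra (quotientGrading (homogeneousSubmodule (Fin (n + 1)) k) I) :=
    quotientGradedAlgebra (isHomogeneous_of_isHomogeneousIdeal hI)
  have : Nontrivial (MvPolynomial (Fin (n + 1)) k ⧸ I) :=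
    Ideal.Quotient.nontrivial_iff.2 (ne_top_of_hilbP_ne_zero hP)
  have : IsReduced (MvPolynomial (Fin (n + 1)) k ⧸ I) :=
    (Ideal.isRadical_iff_quotient_reduced I).1 hrad
  exact exists_finrank_graded_bounds
    (𝒜 := quotientGrading (homogeneousSubmodule (Fin (n + 1)) k) I) hw hint fun s hs =>
      isSMulRegular_aeval_of_isUnmixed hunm hint hs

theorem one_le_idealDeg_and_hilbF_le [Infinite k] (hI : IsHomogeneousIdeal I) (hrad : I.IsRadical)
    (hunm : IsUnmixed k I d) (hP : hilbP k I ≠ 0) (hdim : idealDim k I = d) :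
    1 ≤ idealDeg k I ∧ ∀ m, hilbF k I m ≤ idealDeg k I * (m + d).choose d := by
  obtain ⟨D, δ, hD, hlower, hupper⟩ := exists_hilbF_bounds hI hrad hunm hP hdim
  have hDdeg : D ≤ idealDeg k I := by
    have hcoeff := card_le_factorial_mul_coeff_of_sum_choose_le δ hdim.le (by
      filter_upwards [eventually_hilbF_eq_eval_hilbP hP,
        Filter.eventually_all.2 fun i => Filter.eventually_ge_atTop (δ i)] with m hm hδ
      rw [← hm, Nat.cast_le]
      exact hlower m hδ)
    rw [Fintype.card_fin, ← hdim] at hcoeff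
    exact Nat.le_floor hcoeff
  exact ⟨hD.trans hDdeg, fun m => (hupper m).trans (Nat.mul_le_mul_right _ hDdeg)⟩

end HilbertFunctionBounds

theorem mul_choose_lt_choose_of_factorial_mul_lt_pow {d t m D : ℕ}
    (h : (d + t).factorial * D < (m + 1) ^ t) :
    D * (m + d).choose d < (m + (d + t)).choose (d + t) := by
  have hpow : (m + 1) ^ t ≤ (m + 1 + d).ascFactorial t :=
    (Nat.pow_le_pow_left (Nat.le_add_right _ d) t).trans (Nat.pow_succ_le_ascFactorial _ _)
  refine lt_of_mul_lt_mul_left (a := (d + t).factorial) ?_ (Nat.zero_le _)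
  calc (d + t).factorial * (D * (m + d).choose d)
      = (d + t).factorial * D * (m + d).choose d := (mul_assoc _ _ _).symm
    _ < (m + 1) ^ t * (m + d).choose d :=
      Nat.mul_lt_mul_of_pos_right h (Nat.choose_pos (Nat.le_add_left _ _))
    _ ≤ (m + 1 + d).ascFactorial t * (d.factorial * (m + d).choose d) :=
      Nat.mul_le_mul hpow (Nat.le_mul_of_pos_left _ d.factorial_pos)
    _ = (d + t).factorial * (m + (d + t)).choose (d + t) := by
      rw [← Nat.ascFactorial_eq_factorial_mul_choose, ← Nat.ascFactorial_eq_factorial_mul_choose,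
        mul_comm, Nat.ascFactorial_mul_ascFactorial]

theorem natCast_nthRoot_le_rpow {t : ℕ} (ht : t ≠ 0) (x : ℕ) :
    (Nat.nthRoot t x : ℝ) ≤ (x : ℝ) ^ ((1 : ℝ) / t) := by
  rw [one_div, Real.le_rpow_inv_iff_of_pos (Nat.cast_nonneg _) (Nat.cast_nonneg _)
    (Nat.cast_pos.2 (Nat.pos_of_ne_zero ht)), Real.rpow_natCast]
  exact_mod_cast Nat.pow_nthRoot_le_iff.2 (Or.inl ht)

section RegularSequence

theorem isRegular_map_quotientMk_of_isWeaklyRegular {A S : Type*} [CommRing A] [SetLike S A]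
    [AddSubmonoidClass S A] {𝒜 : ℕ → S} [GradedRing 𝒜] {J : Ideal A} (hJ : J.IsHomogeneous 𝒜)
    (hJtop : J ≠ ⊤) {l : List A} (hl : ∀ f ∈ l, ∃ m, 1 ≤ m ∧ f ∈ 𝒜 m)
    (hreg : RingTheory.Sequence.IsWeaklyRegular (A ⧸ J) l) :
    RingTheory.Sequence.IsRegular (A ⧸ J) (l.map (Ideal.Quotient.mk J)) := by
  refine ⟨(RingTheory.Sequence.isWeaklyRegular_map_algebraMap_iff (A ⧸ J) (A ⧸ J) l).2 hreg,
    fun htop => (Ideal.ne_top_iff_one J).1 hJtop ?_⟩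
  have hle : Ideal.ofList l ≤ (HomogeneousIdeal.irrelevant 𝒜).toIdeal :=
    Ideal.span_le.2 fun f hf => by
      obtain ⟨m, hm, hfm⟩ := hl f hf
      exact HomogeneousIdeal.mem_irrelevant_of_mem 𝒜 hm hfm
  have hone : (1 : A) ∈ Ideal.ofList l ⊔ J := by
    rw [smul_eq_mul, Ideal.mul_top, ← Ideal.map_ofList] at htop
    rw [← Ideal.mk_ker (I := J), ← Ideal.comap_map_of_surjective' _ Ideal.Quotient.mk_surjective,
      ← htop]
    exact Submodule.mem_top
  obtain ⟨a, ha, j, hj, hsum⟩ := Submodule.mem_sup.1 hone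
  have hproj := congrArg (GradedRing.proj 𝒜 0) hsum
  rw [map_add, (HomogeneousIdeal.mem_irrelevant_iff 𝒜 a).1 (hle ha), zero_add,
    GradedRing.proj_apply, GradedRing.proj_apply,
    DirectSum.decompose_of_mem_same 𝒜 SetLike.GradedOne.one_mem] at hproj
  exact hproj ▸ hJ 0 hj

variable {k : Type*} [Field k] {n d : ℕ}

attribute [local instance] MvPolynomial.gradedAlgebra

theorem gradedDepthGE_of_isCohenMacaulayOfDim {J : Ideal (MvPolynomial (Fin (n + 1)) k)} {e : ℕ}
    (hJ : IsCohenMacaulayOfDim k J e) :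
    GradedDepthGE (homogeneousSubmodule (Fin (n + 1)) k) J (e + 1) := by
  obtain ⟨-, g, hg, hreg, -⟩ := hJ
  refine ⟨List.ofFn g, List.length_ofFn, List.forall_mem_ofFn_iff.2 hg, ?_⟩
  rwa [← RingTheory.Sequence.isWeaklyRegular_map_algebraMap_iff (_ ⧸ J), List.map_ofFn]

theorem exists_isHomogeneous_mem_isSMulRegular_quotient [Infinite k]
    {I J : Ideal (MvPolynomial (Fin (n + 1)) k)}
    (hJ : J.IsHomogeneous (homogeneousSubmodule (Fin (n + 1)) k)) {r m : ℕ}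
    (hdepth : GradedDepthGE (homogeneousSubmodule (Fin (n + 1)) k) J (r + 1))
    (hlt : hilbF k I m < (m + r).choose r) :
    ∃ f ∈ I, f.IsHomogeneous m ∧ IsSMulRegular (MvPolynomial (Fin (n + 1)) k ⧸ J) f := by
  obtain ⟨f, ⟨hfm, hfI⟩, hfP⟩ := exists_mem_forall_notMem_of_infinite
    (homogeneousSubmodule (Fin (n + 1)) k m ⊓ I.restrictScalars k)
    (associatedPrimes.finite _ (MvPolynomial (Fin (n + 1)) k ⧸ J)) fun P hP => by
      have : P.IsPrime := (mem_associatedPrimes_quotient_iff.1 hP).1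
      have hdim := hdepth.le_ringKrullDim_quotient hJ hP
      obtain ⟨f, hfI, hfm, hfP⟩ := exists_isHomogeneous_mem_notMem_of_hilbF_lt
        (hlt.trans_le (choose_le_hilbF_of_isPrime hdim m))
      exact ⟨f, ⟨hfm, hfI⟩, hfP⟩
  exact ⟨f, hfI, hfm, isSMulRegular_quotient_of_forall_associatedPrimes_notMem hfP⟩

-- The elements are chosen from last to first: the larger the depth still available, the smaller
-- the exponent in the bound on the degree. Permutability restores the order of the statement.
theorem exists_isWeaklyRegular_ofFn_of_hilbF_le [Infinite k]
    {I : Ideal (MvPolynomial (Fin (n + 1)) k)} {D : ℕ} (hD : 1 ≤ D)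
    (hbound : ∀ m, hilbF k I m ≤ D * (m + d).choose d) (t : ℕ)
    {J : Ideal (MvPolynomial (Fin (n + 1)) k)}
    (hJ : J.IsHomogeneous (homogeneousSubmodule (Fin (n + 1)) k))
    (hdepth : GradedDepthGE (homogeneousSubmodule (Fin (n + 1)) k) J (d + t + 1)) :
    ∃ f : Fin t → MvPolynomial (Fin (n + 1)) k,
      (∀ j, f j ∈ I ∧ ∃ m : ℕ, 1 ≤ m ∧ (f j).IsHomogeneous m ∧
        (m : ℝ) ≤ (((d + j + 1).factorial * D : ℕ) : ℝ) ^ ((1 : ℝ) / (j + 1))) ∧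
      RingTheory.Sequence.IsWeaklyRegular (MvPolynomial (Fin (n + 1)) k ⧸ J) (List.ofFn f) := by
  induction t generalizing J with
  | zero => exact ⟨Fin.elim0, fun j => j.elim0, by rw [List.ofFn_zero]; exact .nil _ _⟩
  | succ t ih =>
    let m := Nat.nthRoot (t + 1) ((d + t + 1).factorial * D)
    have hm : 1 ≤ m := (Nat.le_nthRoot_iff t.succ_ne_zero).2 <| by
      rw [one_pow]
      exact Nat.mul_pos (Nat.factorial_pos _) hD
    have hlt : hilbF k I m < (m + (d + (t + 1))).choose (d + (t + 1)) :=
      (hbound m).trans_lt <| mul_choose_lt_choose_of_factorial_mul_lt_pow <|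
        Nat.lt_pow_nthRoot_add_one t.succ_ne_zero _
    obtain ⟨f, hfI, hfm, hf⟩ := exists_isHomogeneous_mem_isSMulRegular_quotient hJ hdepth hlt
    obtain ⟨g, hg, hgreg⟩ := ih (isHomogeneous_sup_span_singleton hJ hfm)
      (hdepth.sup_span_singleton hf ⟨m, hm, hfm⟩)
    refine ⟨Fin.snoc g f, fun j => ?_, ?_⟩
    · cases j using Fin.lastCases with
      | last =>
        rw [Fin.snoc_last]
        refine ⟨hfI, m, hm, hfm, ?_⟩
        simpa only [Fin.val_last, Nat.cast_add_one] using
          natCast_nthRoot_le_rpow t.succ_ne_zero ((d + t + 1).factorial * D)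
      | cast j => simpa only [Fin.snoc_castSucc, Fin.val_castSucc] using hg j
    · have hperm : (f :: List.ofFn g).Perm (List.ofFn (Fin.snoc g f : Fin (t + 1) → _)) := by
        simpa only [List.ofFn_succ', Fin.snoc_castSucc, Fin.snoc_last, List.concat_eq_append] using
          (List.perm_append_singleton f (List.ofFn g)).symm
      refine isWeaklyRegular_quotient_of_perm hperm hJ ?_
        (isWeaklyRegular_quotient_cons_iff.2 ⟨hf, hgreg⟩)
      refine List.forall_mem_cons.2 ⟨⟨m, hm, hfm⟩, List.forall_mem_ofFn_iff.2 fun j => ?_⟩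
      obtain ⟨-, m', hm', hgm', -⟩ := hg j
      exact ⟨m', hm', hgm'⟩

theorem exists_regular_sequence_in_unmixed_ideal_general {k : Type*} [Field k] [Infinite k]
    {n d t : ℕ} (I J : Ideal (MvPolynomial (Fin (n + 1)) k)) (hIhom : IsHomogeneousIdeal I)
    (hIrad : I.IsRadical) (hIunm : IsUnmixed k I d) (hIne : hilbP k I ≠ 0)
    (hIdim : idealDim k I = d) (hJhom : IsHomogeneousIdeal J) (hJne : J ≠ ⊤)
    (hJdepth : GradedDepthGE (homogeneousSubmodule (Fin (n + 1)) k) J (d + t + 1)) :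
    ∃ f : Fin t → MvPolynomial (Fin (n + 1)) k,
      (∀ j, f j ∈ I ∧ ∃ m : ℕ, (f j).IsHomogeneous m ∧
        (m : ℝ) ≤ (((d + (j : ℕ) + 1).factorial * idealDeg k I : ℕ) : ℝ) ^
          ((1 : ℝ) / ((j : ℕ) + 1))) ∧
      RingTheory.Sequence.IsRegular (MvPolynomial (Fin (n + 1)) k ⧸ J)
        (List.ofFn fun j => Ideal.Quotient.mk J (f j)) := by
  have hJ := isHomogeneous_of_isHomogeneousIdeal hJhom
  obtain ⟨hdeg, hbound⟩ := one_le_idealDeg_and_hilbF_le hIhom hIrad hIunm hIne hIdim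
  obtain ⟨f, hf, hreg⟩ := exists_isWeaklyRegular_ofFn_of_hilbF_le hdeg hbound t hJ hJdepth
  choose hfI m hm hfm hle using hf
  refine ⟨f, fun j => ⟨hfI j, m j, hfm j, hle j⟩, ?_⟩
  have hmap := isRegular_map_quotientMk_of_isWeaklyRegular hJ hJne
    (List.forall_mem_ofFn_iff.2 fun j => ⟨m j, hm j, hfm j⟩) hreg
  rwa [List.map_ofFn] at hmap

end RegularSequence

/-- construction of a regular sequence in `k[x₀,…,xₙ]/J` with
homogeneous elements of `I` of controlled degrees, where `I` is unmixed radical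
of projective dimension `d` and `J` is Cohen--Macaulay of projective dimension
`e ≥ d` (here `f j`, for `j : Fin (e − d)`, plays the role of `f_{j+1}`). -/
theorem exists_regular_sequence_in_unmixed_ideal {k : Type*} [Field k]
    [PerfectField k] [Infinite k] {n d e : ℕ}
    (I J : Ideal (MvPolynomial (Fin (n+1)) k))
    (hIhom : IsHomogeneousIdeal I) (hIrad : I.IsRadical) (hIunm : IsUnmixed k I d)
    (hIne : hilbP k I ≠ 0) (hIdim : idealDim k I = d)
    (hJhom : IsHomogeneousIdeal J) (hJCM : IsCohenMacaulayOfDim k J e)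
    (hde : d ≤ e) :
    ∃ f : Fin (e - d) → MvPolynomial (Fin (n+1)) k,
      (∀ j, f j ∈ I ∧ ∃ m : ℕ, (f j).IsHomogeneous m ∧
        (m : ℝ) ≤ (((d + (j : ℕ) + 1).factorial * idealDeg k I : ℕ) : ℝ) ^
          ((1 : ℝ) / ((j : ℕ) + 1))) ∧
      RingTheory.Sequence.IsRegular (MvPolynomial (Fin (n+1)) k ⧸ J)
        (List.ofFn fun j => Ideal.Quotient.mk J (f j)) := by
  refine exists_regular_sequence_in_unmixed_ideal_general I J hIhom hIrad hIunm hIne hIdim hJhom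
    hJCM.1 ?_
  rw [Nat.add_sub_cancel' hde]
  exact gradedDepthGE_of_isCohenMacaulayOfDim hJCM
end

section
/- Let s ≤ n and let F, f_1,...,f_s ∈ k[x_0,...,x_n] be homogeneous polynomials with deg F ≥ 1, such that f_1,...,f_s is a weak regular sequence in the localization k[x_0,...,x_n]_F. Let I = (f_1,...,f_s) ⊆ k[x_0,...,x_n]_F and I^c = I ∩ k[x_0,...,x_n]. Then deg I^c ≤ ∏_{i=1}^s deg f_i. -/
open MvPolynomial

/-!
Compare power series coefficientwise and write `I_i^c` for the contraction of `(f_1, …, f_i)`.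
Since `f_{i+1}` is a nonzerodivisor modulo `I_i^c` and lies in `I_{i+1}^c`, the Hilbert series
satisfy `H_{i+1} ≤ (1 - X ^ e_{i+1}) H_i`. Multiplication by the nonnegative series
`1 / (1 - X) ^ (i + 1)` turns the factor into
`(1 + X + ⋯ + X ^ (e_{i+1} - 1)) / (1 - X) ^ i`, so that inductively
`H_s / (1 - X) ^ s ≤ (∏ e_i) / (1 - X) ^ (n + 1)`.

If `I_s^c` is proper, Krull's height theorem and going-down place it in a prime of height at most
`s`. At least `n + 1 - s` of the variables are algebraically independent modulo this prime, so the
Hilbert polynomial has degree `d ≥ n - s`. If its leading coefficient is `δ / d!`, the left-hand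
side above grows like `δ m ^ (d + s) / (d + s)!` and the right-hand side is at most
`(∏ e_i) / (1 - X) ^ (d + s + 1)`; hence `δ ≤ ∏ e_i`.
-/

open scoped PowerSeries

section CoefficientwiseOrder

/-- The coefficientwise comparison of power series. -/
def CoeffLE {R : Type*} [Semiring R] [LE R] (φ ψ : R⟦X⟧) : Prop :=
  ∀ m, PowerSeries.coeff m φ ≤ PowerSeries.coeff m ψ

/-- The geometric series `1 + X + X ^ 2 + ⋯ = 1 / (1 - X)`. -/
noncomputable def geomSeries (R : Type*) [Semiring R] : R⟦X⟧ :=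
  PowerSeries.mk 1

lemma coeff_geomSeries_pow {R : Type*} [CommRing R] (d m : ℕ) :
    PowerSeries.coeff m (geomSeries R ^ d) = (d.multichoose m : R) := by
  cases d with
  | zero => cases m <;> simp [PowerSeries.coeff_one]
  | succ d =>
    rw [geomSeries, PowerSeries.mk_one_pow_eq_mk_choose_add, PowerSeries.coeff_mk,
      Nat.multichoose_eq, Nat.add_right_comm, Nat.add_sub_cancel, Nat.choose_symm_add]

lemma geomSeries_mul_one_sub_X_pow {R : Type*} [CommRing R] (e : ℕ) :
    geomSeries R * (1 - PowerSeries.X ^ e) = ∑ j ∈ Finset.range e, PowerSeries.X ^ j := by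
  rw [← mul_neg_geom_sum, ← mul_assoc, geomSeries, PowerSeries.mk_one_mul_one_sub_eq_one, one_mul]

namespace CoeffLE

lemma trans {R : Type*} [Semiring R] [Preorder R] {φ ψ χ : R⟦X⟧}
    (h₁ : CoeffLE φ ψ) (h₂ : CoeffLE ψ χ) : CoeffLE φ χ :=
  fun m => (h₁ m).trans (h₂ m)

variable {R : Type*} [Semiring R] [PartialOrder R] [IsOrderedRing R] {φ ψ χ : R⟦X⟧}

lemma mul_left (h : CoeffLE φ ψ) (hχ : CoeffLE 0 χ) : CoeffLE (χ * φ) (χ * ψ) := by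
  intro m
  rw [PowerSeries.coeff_mul, PowerSeries.coeff_mul]
  exact Finset.sum_le_sum fun p _ =>
    mul_le_mul_of_nonneg_left (h p.2) (by simpa only [map_zero] using hχ p.1)

lemma sum {ι : Type*} {s : Finset ι} {φ ψ : ι → R⟦X⟧}
    (h : ∀ i ∈ s, CoeffLE (φ i) (ψ i)) : CoeffLE (∑ i ∈ s, φ i) (∑ i ∈ s, ψ i) := by
  intro m
  simpa only [map_sum] using Finset.sum_le_sum fun i hi => h i hi m

lemma natCast_nonneg (c : ℕ) : CoeffLE 0 (c : R⟦X⟧) := by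
  intro m
  rw [← map_natCast PowerSeries.C, PowerSeries.coeff_C, map_zero]
  split_ifs
  exacts [Nat.cast_nonneg c, le_rfl]

lemma X_pow_nonneg (j : ℕ) : CoeffLE 0 (PowerSeries.X ^ j : R⟦X⟧) := by
  intro m
  rw [PowerSeries.coeff_X_pow, map_zero]
  split_ifs
  exacts [zero_le_one, le_rfl]

end CoeffLE

variable {R : Type*} [CommRing R] [PartialOrder R] [IsOrderedRing R] {φ ψ : R⟦X⟧}

lemma geomSeries_pow_nonneg (d : ℕ) : CoeffLE 0 (geomSeries R ^ d) := by
  intro m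
  rw [map_zero, coeff_geomSeries_pow]
  exact Nat.cast_nonneg _

lemma one_le_geomSeries : CoeffLE 1 (geomSeries R) := by
  intro m
  rw [PowerSeries.coeff_one, geomSeries, PowerSeries.coeff_mk, Pi.one_apply]
  split_ifs
  exacts [le_rfl, zero_le_one]

lemma geomSeries_pow_le_pow {a b : ℕ} (h : a ≤ b) :
    CoeffLE (geomSeries R ^ a) (geomSeries R ^ b) := by
  induction b, h using Nat.le_induction with
  | base => exact fun m => le_rfl
  | succ b _ ih =>
    refine ih.trans ?_
    simpa only [mul_one, pow_succ] using
      one_le_geomSeries.mul_left (geomSeries_pow_nonneg (R := R) b)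

lemma X_pow_mul_geomSeries_le (j : ℕ) :
    CoeffLE (PowerSeries.X ^ j * geomSeries R) (geomSeries R) := by
  intro m
  rw [PowerSeries.coeff_X_pow_mul']
  simp only [geomSeries, PowerSeries.coeff_mk, Pi.one_apply]
  split_ifs
  exacts [le_rfl, zero_le_one]

lemma X_pow_mul_geomSeries_pow_succ_le (j d : ℕ) :
    CoeffLE (PowerSeries.X ^ j * geomSeries R ^ (d + 1)) (geomSeries R ^ (d + 1)) := by
  simpa only [pow_succ, mul_left_comm] using
    (X_pow_mul_geomSeries_le j).mul_left (geomSeries_pow_nonneg (R := R) d)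

lemma geom_sum_X_mul_geomSeries_pow_succ_le (e d : ℕ) :
    CoeffLE ((∑ j ∈ Finset.range e, PowerSeries.X ^ j) * geomSeries R ^ (d + 1))
      ((e : R⟦X⟧) * geomSeries R ^ (d + 1)) := by
  simpa only [Finset.sum_mul, Finset.sum_const, Finset.card_range, nsmul_eq_mul] using
    CoeffLE.sum fun j (_ : j ∈ Finset.range e) => X_pow_mul_geomSeries_pow_succ_le (R := R) j d

lemma geomSeries_pow_succ_mul_le {i d e E : ℕ} (hstep : CoeffLE ψ ((1 - PowerSeries.X ^ e) * φ))
    (hφ : CoeffLE (geomSeries R ^ i * φ) ((E : R⟦X⟧) * geomSeries R ^ (d + 1))) :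
    CoeffLE (geomSeries R ^ (i + 1) * ψ) (((E * e : ℕ) : R⟦X⟧) * geomSeries R ^ (d + 1)) := by
  have hsum_nonneg : CoeffLE (0 : R⟦X⟧) (∑ j ∈ Finset.range e, PowerSeries.X ^ j) := by
    simpa only [Finset.sum_const_zero] using
      CoeffLE.sum fun j (_ : j ∈ Finset.range e) => CoeffLE.X_pow_nonneg (R := R) j
  have hψ := hstep.mul_left (geomSeries_pow_nonneg (i + 1))
  have hcancel : geomSeries R ^ (i + 1) * ((1 - PowerSeries.X ^ e) * φ) =
      (∑ j ∈ Finset.range e, PowerSeries.X ^ j) * (geomSeries R ^ i * φ) := by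
    rw [← geomSeries_mul_one_sub_X_pow]
    ring
  have hE := (geom_sum_X_mul_geomSeries_pow_succ_le e d).mul_left
    (CoeffLE.natCast_nonneg (R := R) E)
  rw [hcancel] at hψ
  refine hψ.trans ((hφ.mul_left hsum_nonneg).trans ?_)
  rwa [mul_left_comm, Nat.cast_mul, mul_assoc]

end CoefficientwiseOrder

section HilbertPolynomialGrowth

open Filter

lemma eventually_eval_natCast_pos {p : Polynomial ℚ} {d : ℕ} (hdeg : p.natDegree ≤ d)
    (hcoeff : 0 < p.coeff d) : ∀ᶠ m : ℕ in atTop, 0 < p.eval (m : ℚ) := by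
  obtain rfl : p.natDegree = d :=
    hdeg.antisymm (Polynomial.le_natDegree_of_ne_zero hcoeff.ne')
  rcases Nat.eq_zero_or_pos p.natDegree with hconst | hpos
  · rw [Polynomial.eq_C_of_natDegree_eq_zero hconst]
    rw [hconst] at hcoeff
    simpa only [Polynomial.eval_C] using Eventually.of_forall fun _ => hcoeff
  · have htop := p.tendsto_atTop_of_leadingCoeff_nonneg
      (Polynomial.natDegree_pos_iff_degree_pos.mp hpos) hcoeff.le
    exact (htop.comp tendsto_natCast_atTop_atTop).eventually_gt_atTop 0

lemma eventually_eval_natCast_lt {p q : Polynomial ℚ} {d : ℕ} (hp : p.natDegree ≤ d)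
    (hq : q.natDegree ≤ d) (hcoeff : p.coeff d < q.coeff d) :
    ∀ᶠ m : ℕ in atTop, p.eval (m : ℚ) < q.eval (m : ℚ) := by
  have hsub : 0 < (q - p).coeff d := by rwa [Polynomial.coeff_sub, sub_pos]
  have hdeg : (q - p).natDegree ≤ d :=
    (Polynomial.natDegree_sub_le_of_le hq hp).trans_eq (max_self d)
  filter_upwards [eventually_eval_natCast_pos hdeg hsub] with m hm
  rwa [Polynomial.eval_sub, sub_pos] at hm

lemma eval_preHilbertPoly_eq_coeff (d : ℕ) {a m : ℕ} (h : a ≤ m) :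
    (Polynomial.preHilbertPoly ℚ d a).eval (m : ℚ) =
      PowerSeries.coeff m (PowerSeries.X ^ a * geomSeries ℚ ^ (d + 1)) := by
  rw [Polynomial.preHilbertPoly_eq_choose_sub_add ℚ d h, PowerSeries.coeff_X_pow_mul', if_pos h,
    geomSeries, PowerSeries.mk_one_pow_eq_mk_choose_add, PowerSeries.coeff_mk, add_comm]

variable {H : ℚ⟦X⟧} {P : Polynomial ℚ}

lemma le_natDegree_succ_of_geomSeries_pow_le {t : ℕ}
    (hP : ∀ᶠ m : ℕ in atTop, PowerSeries.coeff m H = P.eval (m : ℚ))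
    (hH : CoeffLE (geomSeries ℚ ^ t) H) : t ≤ P.natDegree + 1 := by
  by_contra! hlt
  obtain ⟨r, rfl⟩ := Nat.exists_eq_succ_of_ne_zero (Nat.ne_zero_of_lt hlt)
  have hdeg : P.natDegree < r := Nat.lt_of_succ_lt_succ hlt
  have hcoeff : P.coeff r < (Polynomial.preHilbertPoly ℚ r 0).coeff r := by
    rw [Polynomial.coeff_eq_zero_of_natDegree_lt hdeg, Polynomial.coeff_preHilbertPoly_self]
    positivity
  obtain ⟨m, hm, hPm⟩ := (hP.and (eventually_eval_natCast_lt hdeg.le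
    (Polynomial.natDegree_preHilbertPoly ℚ r 0).le hcoeff)).exists
  rw [eval_preHilbertPoly_eq_coeff r m.zero_le, pow_zero, one_mul, ← hm] at hPm
  exact hPm.not_ge (hH m)

lemma exists_smul_X_pow_mul_geomSeries_le {c : ℚ} (hH : CoeffLE 0 H)
    (hP : ∀ᶠ m : ℕ in atTop, PowerSeries.coeff m H = P.eval (m : ℚ))
    (hc : c < P.natDegree.factorial * P.leadingCoeff) (hc₀ : 0 ≤ c) :
    ∃ a, CoeffLE (c • (PowerSeries.X ^ a * geomSeries ℚ ^ (P.natDegree + 1))) H := by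
  set d := P.natDegree with hd
  have hcoeff : (c • Polynomial.preHilbertPoly ℚ d 0).coeff d < P.coeff d := by
    rw [Polynomial.coeff_smul, Polynomial.coeff_preHilbertPoly_self, smul_eq_mul,
      ← div_eq_mul_inv, div_lt_iff₀' (by positivity)]
    exact hc
  have hdeg : (c • Polynomial.preHilbertPoly ℚ d 0).natDegree ≤ d :=
    (Polynomial.natDegree_smul_le _ _).trans (Polynomial.natDegree_preHilbertPoly ℚ d 0).le
  obtain ⟨a, ha⟩ := eventually_atTop.mp
    (hP.and (eventually_eval_natCast_lt hdeg hd.ge hcoeff))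
  refine ⟨a, fun m => ?_⟩
  rcases le_or_gt a m with ham | hma
  · obtain ⟨hm, hlt⟩ := ha m ham
    rw [Polynomial.eval_smul, eval_preHilbertPoly_eq_coeff d m.zero_le, pow_zero, one_mul,
      ← hm] at hlt
    rw [map_smul]
    exact (smul_le_smul_of_nonneg_left (X_pow_mul_geomSeries_pow_succ_le a d m) hc₀).trans hlt.le
  · rw [map_smul, PowerSeries.coeff_X_pow_mul', if_neg hma.not_ge, smul_zero]
    simpa only [map_zero] using hH m

lemma le_of_smul_X_pow_mul_geomSeries_le {c : ℚ} {E a D : ℕ}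
    (h : CoeffLE (c • (PowerSeries.X ^ a * geomSeries ℚ ^ (D + 1)))
      ((E : ℚ⟦X⟧) * geomSeries ℚ ^ (D + 1))) : c ≤ E := by
  by_contra! hlt
  have hdeg (b : ℚ) (j : ℕ) : (b • Polynomial.preHilbertPoly ℚ D j).natDegree ≤ D :=
    (Polynomial.natDegree_smul_le _ _).trans (Polynomial.natDegree_preHilbertPoly ℚ D j).le
  have hcoeff : ((E : ℚ) • Polynomial.preHilbertPoly ℚ D 0).coeff D <
      (c • Polynomial.preHilbertPoly ℚ D a).coeff D := by
    simp only [Polynomial.coeff_smul, Polynomial.coeff_preHilbertPoly_self, smul_eq_mul]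
    gcongr
  obtain ⟨m, hm, ham⟩ := ((eventually_eval_natCast_lt (hdeg _ 0) (hdeg c a) hcoeff).and
    (eventually_ge_atTop a)).exists
  simp only [Polynomial.eval_smul, eval_preHilbertPoly_eq_coeff D m.zero_le,
    eval_preHilbertPoly_eq_coeff D ham, pow_zero, one_mul, ← map_smul] at hm
  refine hm.not_ge ?_
  simpa only [Nat.cast_smul_eq_nsmul, nsmul_eq_mul] using h m

theorem factorial_natDegree_mul_leadingCoeff_le {n s t E : ℕ}
    (hP : ∀ᶠ m : ℕ in atTop, PowerSeries.coeff m H = P.eval (m : ℚ))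
    (hlower : CoeffLE (geomSeries ℚ ^ t) H) (hdim : n + 1 ≤ t + s)
    (hupper : CoeffLE (geomSeries ℚ ^ s * H) ((E : ℚ⟦X⟧) * geomSeries ℚ ^ (n + 1))) :
    P.natDegree.factorial * P.leadingCoeff ≤ (E : ℚ) := by
  refine le_of_forall_lt_imp_le_of_dense fun c hc => ?_
  rcases le_or_gt c 0 with hc₀ | hc₀
  · exact hc₀.trans E.cast_nonneg
  obtain ⟨a, ha⟩ := exists_smul_X_pow_mul_geomSeries_le
    ((geomSeries_pow_nonneg t).trans hlower) hP hc hc₀.le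
  have hle : n + 1 ≤ s + P.natDegree + 1 := by
    have := le_natDegree_succ_of_geomSeries_pow_le hP hlower
    lia
  apply le_of_smul_X_pow_mul_geomSeries_le (a := a) (D := s + P.natDegree)
  have hleft := ha.mul_left (geomSeries_pow_nonneg s)
  rw [mul_smul_comm, mul_left_comm, ← pow_add, ← add_assoc] at hleft
  exact hleft.trans (hupper.trans ((geomSeries_pow_le_pow hle).mul_left (.natCast_nonneg E)))

end HilbertPolynomialGrowth

section IndependentVariables

lemma height_under_le {S A : Type*} [CommRing S] [CommRing A] [Algebra S A] [IsNoetherianRing S]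
    [IsNoetherianRing A] [Algebra.HasGoingDown S A] (Q : Ideal A) [Q.IsPrime] :
    (Q.under S).height ≤ Q.height := by
  rw [Ideal.height_eq_height_add_of_liesOver_of_hasGoingDown (Q.under S) Q]
  exact le_self_add

lemma algebraicIndependent_mk_of_comap {k A B ι : Type*} [CommRing k] [CommRing A] [CommRing B]
    [Algebra k A] [Algebra k B] (g : A →ₐ[k] B) {I : Ideal B} {x : ι → A}
    (hx : AlgebraicIndependent k fun i => Ideal.Quotient.mk (I.comap g) (x i)) :
    AlgebraicIndependent k fun i => Ideal.Quotient.mk I (g (x i)) :=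
  hx.map' (f := Ideal.quotientMapₐ I g le_rfl)
    (Ideal.quotientMap_injective (I := I) (f := g.toRingHom))

section PolynomialExtension

universe u

variable {S : Type*} [CommRing S] {Q : Ideal (Polynomial S)}

lemma height_under_add_one_le [IsNoetherianRing S] [Q.IsPrime]
    (hQ : ¬ Q ≤ (Q.under S).map Polynomial.C) : (Q.under S).height + 1 ≤ Q.height := by
  have hle : (Q.under S).map Polynomial.C ≤ Q := Ideal.map_le_iff_le_comap.mpr le_rfl
  have hprime : ((Q.under S).map Polynomial.C).IsPrime := Ideal.isPrime_map_C_of_isPrime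
  have hunder : Q.under S ≤ ((Q.under S).map Polynomial.C).under S := Ideal.le_comap_map
  calc (Q.under S).height + 1 ≤ ((Q.under S).map Polynomial.C).height + 1 := by
        gcongr
        exact (Ideal.height_mono hunder).trans (height_under_le _)
    _ ≤ Q.height := Ideal.height_add_one_le_of_lt_of_isPrime (lt_of_le_not_ge hle hQ)

lemma transcendental_mk_X (hQ : Q ≤ (Q.under S).map Polynomial.C) :
    Transcendental (S ⧸ Q.under S) (Ideal.Quotient.mk Q Polynomial.X) := by
  rw [transcendental_iff]
  intro p hp
  obtain ⟨q, rfl⟩ := Polynomial.map_surjective _ Ideal.Quotient.mk_surjective p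
  have hq : q ∈ Q := by
    rw [← Ideal.Quotient.eq_zero_iff_mem, ← hp, ← Ideal.Quotient.algebraMap_eq (Q.under S),
      Polynomial.aeval_map_algebraMap, ← Ideal.Quotient.mkₐ_eq_mk S, Polynomial.aeval_algHom_apply,
      Polynomial.aeval_X_left_apply]
  ext i
  rw [Polynomial.coeff_map, Polynomial.coeff_zero, Ideal.Quotient.eq_zero_iff_mem]
  exact Ideal.mem_map_C_iff.mp (hQ hq) i

lemma algebraicIndependent_mk_X_elim_C {k ι : Type*} [CommRing k] [Algebra k S] {x : ι → S}
    (hQ : Q ≤ (Q.under S).map Polynomial.C)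
    (hx : AlgebraicIndependent k fun i => Ideal.Quotient.mk (Q.under S) (x i)) :
    AlgebraicIndependent k fun o : Option ι =>
      Ideal.Quotient.mk Q (o.elim Polynomial.X fun i => Polynomial.C (x i)) := by
  have hX : AlgebraicIndependent (S ⧸ Q.under S)
      fun _ : Unit => Ideal.Quotient.mk Q Polynomial.X :=
    algebraicIndependent_unique_type_iff.mpr (transcendental_mk_X hQ)
  convert! (hx.sumElim_comp hX).comp ((Equiv.optionEquivSumPUnit ι).trans (Equiv.sumComm _ _))
    (Equiv.injective _) with o
  cases o <;> rfl

lemma exists_algebraicIndependent_mk_elim_C {k : Type*} {ι : Type u} [CommRing k]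
    [IsNoetherianRing S] [Algebra k S] [Fintype ι] [Q.IsPrime] {x : ι → S}
    (hx : AlgebraicIndependent k fun i => Ideal.Quotient.mk (Q.under S) (x i)) :
    ∃ (ι' : Type u) (_ : Fintype ι') (w : ι' → Option ι),
      AlgebraicIndependent k (fun j =>
        Ideal.Quotient.mk Q ((w j).elim Polynomial.X fun i => Polynomial.C (x i))) ∧
      Fintype.card ι + (Q.under S).height + 1 ≤ Fintype.card ι' + Q.height := by
  by_cases hQ : Q ≤ (Q.under S).map Polynomial.C
  · refine ⟨Option ι, inferInstance, id, algebraicIndependent_mk_X_elim_C hQ hx, ?_⟩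
    rw [Fintype.card_option, Nat.cast_succ, add_right_comm]
    gcongr
    exact height_under_le Q
  · refine ⟨ι, inferInstance, some, algebraicIndependent_mk_of_comap Polynomial.CAlgHom hx, ?_⟩
    rw [add_assoc]
    gcongr
    exact height_under_add_one_le hQ

end PolynomialExtension

theorem exists_algebraicIndependent_mk_X {k : Type*} [Field k] {N : ℕ}
    (P : Ideal (MvPolynomial (Fin N) k)) [P.IsPrime] :
    ∃ (ι : Type) (_ : Fintype ι) (v : ι → Fin N),
      AlgebraicIndependent k (fun i => Ideal.Quotient.mk P (X (v i))) ∧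
        (N : ℕ∞) ≤ Fintype.card ι + P.height := by
  induction N with
  | zero =>
    exact ⟨Empty, inferInstance, Empty.elim,
      algebraicIndependent_empty_type_iff.mpr (algebraMap k _).injective, by simp⟩
  | succ N ih =>
    let unsplit := (finSuccEquiv k N).symm
    let Q := P.comap unsplit.toAlgHom
    have hheight : Q.height = P.height := unsplit.toRingEquiv.height_comap P
    obtain ⟨ι, _, v, hv, hN⟩ := ih (Q.under (MvPolynomial (Fin N) k))
    obtain ⟨ι', _, w, hw, hcard⟩ := exists_algebraicIndependent_mk_elim_C hv
    have hvar (o : Option ι) : unsplit (o.elim Polynomial.X fun i => Polynomial.C (X (v i))) =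
        X (o.elim 0 fun i => (v i).succ) := by
      rw [AlgEquiv.symm_apply_eq]
      cases o with
      | none => exact finSuccEquiv_X_zero.symm
      | some i => exact finSuccEquiv_X_succ.symm
    refine ⟨ι', inferInstance, fun j => (w j).elim 0 fun i => (v i).succ, ?_, ?_⟩
    · simp only [← hvar]
      exact algebraicIndependent_mk_of_comap unsplit.toAlgHom hw
    · calc ((N + 1 : ℕ) : ℕ∞) ≤ Fintype.card ι + (Q.under _).height + 1 := by
            push_cast
            gcongr
        _ ≤ Fintype.card ι' + P.height := hheight ▸ hcard

end IndependentVariables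

section HilbertFunction

lemma finrank_map_add_finrank_le {k V W : Type*} [DivisionRing k] [AddCommGroup V] [Module k V]
    [AddCommGroup W] [Module k W] {A B : Submodule k V} [Module.Finite k A] {π : V →ₗ[k] W}
    (hBA : B ≤ A) (hBπ : B ≤ LinearMap.ker π) :
    Module.finrank k (A.map π) + Module.finrank k B ≤ Module.finrank k A := by
  rw [← LinearMap.finrank_range_add_finrank_ker (π.domRestrict A), LinearMap.range_domRestrict,
    ← (Submodule.submoduleOfEquivOfLe hBA).finrank_eq, LinearMap.ker_domRestrict]
  gcongr
  exact Submodule.finrank_mono (Submodule.comap_mono hBπ)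

lemma finrank_homogeneousSubmodule {σ k : Type*} [Fintype σ] [CommRing k] [Nontrivial k] (m : ℕ) :
    Module.finrank k (homogeneousSubmodule σ k m) = (Fintype.card σ).multichoose m := by
  classical
  have hset : {d : σ →₀ ℕ | d.degree = m} = ↑(Finset.univ.finsuppAntidiag m : Finset (σ →₀ ℕ)) := by
    ext d
    simp [Finsupp.degree_eq_sum]
  rw [homogeneousSubmodule_eq_finsupp_supported, hset, ← Finset.card_univ,
    ← Finset.card_finsuppAntidiag_nat_eq_multichoose]
  exact (Module.finrank_eq_card_basis (basisRestrictSupport k _)).trans (Fintype.card_coe _)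

variable {k : Type*} [Field k] {n : ℕ}

/-- The space `(R / I)_m` of residue classes of forms of degree `m`, whose dimension is
`hilbF k I m`. -/
noncomputable abbrev quotientForms (I : Ideal (MvPolynomial (Fin (n + 1)) k)) (m : ℕ) :
    Submodule k (MvPolynomial (Fin (n + 1)) k ⧸ I) :=
  (homogeneousSubmodule (Fin (n + 1)) k m).map (Ideal.Quotient.mkₐ k I).toLinearMap

instance finite_quotientForms (I : Ideal (MvPolynomial (Fin (n + 1)) k)) (m : ℕ) :
    Module.Finite k (quotientForms I m) :=
  Module.Finite.iff_fg.mpr ((homogeneousSubmodule_fg _ _ m).map _)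

variable {I J : Ideal (MvPolynomial (Fin (n + 1)) k)}

lemma map_factor_quotientForms (h : I ≤ J) (m : ℕ) :
    (quotientForms I m).map (Ideal.Quotient.factorₐ k h).toLinearMap = quotientForms J m := by
  rw [← Submodule.map_comp]
  rfl

lemma hilbF_antitone (h : I ≤ J) (m : ℕ) : hilbF k J m ≤ hilbF k I m := by
  calc hilbF k J m = Module.finrank k ((quotientForms I m).map
          (Ideal.Quotient.factorₐ k h).toLinearMap) := by rw [map_factor_quotientForms h, hilbF]
    _ ≤ hilbF k I m := Submodule.finrank_map_le _ _

lemma hilbF_le_multichoose (m : ℕ) : hilbF k I m ≤ (n + 1).multichoose m := by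
  have : Module.Finite k (homogeneousSubmodule (Fin (n + 1)) k m) :=
    Module.Finite.iff_fg.mpr (homogeneousSubmodule_fg _ _ m)
  calc hilbF k I m ≤ Module.finrank k (homogeneousSubmodule (Fin (n + 1)) k m) :=
        Submodule.finrank_map_le _ _
    _ = (n + 1).multichoose m := by rw [finrank_homogeneousSubmodule, Fintype.card_fin]

lemma multichoose_le_hilbF {ι : Type*} [Fintype ι] {v : ι → Fin (n + 1)}
    (hv : AlgebraicIndependent k fun i => Ideal.Quotient.mk I (X (v i))) (m : ℕ) :
    (Fintype.card ι).multichoose m ≤ hilbF k I m := by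
  let φ : MvPolynomial ι k →ₐ[k] MvPolynomial (Fin (n + 1)) k ⧸ I :=
    aeval fun i => Ideal.Quotient.mk I (X (v i))
  have hφ : φ = (Ideal.Quotient.mkₐ k I).comp (rename v) := by
    ext i
    simp [φ]
  have hle : (homogeneousSubmodule ι k m).map φ.toLinearMap ≤ quotientForms I m := by
    rintro _ ⟨p, hp, rfl⟩
    exact ⟨rename v p, IsHomogeneous.rename_isHomogeneous hp, (DFunLike.congr_fun hφ p).symm⟩
  calc (Fintype.card ι).multichoose m
      = Module.finrank k ((homogeneousSubmodule ι k m).map φ.toLinearMap) := by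
        rw [← (Submodule.equivMapOfInjective φ.toLinearMap hv _).finrank_eq,
          finrank_homogeneousSubmodule]
    _ ≤ hilbF k I m := Submodule.finrank_mono hle

lemma hilbF_add_hilbF_le {f : MvPolynomial (Fin (n + 1)) k} {e : ℕ} (hf : f.IsHomogeneous e)
    (hIJ : I ≤ J) (hfJ : f ∈ J) (hreg : ∀ x, f * x ∈ I → x ∈ I) (m : ℕ) :
    hilbF k J (m + e) + hilbF k I m ≤ hilbF k I (m + e) := by
  let μ := LinearMap.mulLeft k (Ideal.Quotient.mk I f)
  have hμ : Function.Injective μ := by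
    refine (injective_iff_map_eq_zero μ).mpr fun x hx => ?_
    obtain ⟨x, rfl⟩ := Ideal.Quotient.mk_surjective x
    rw [LinearMap.mulLeft_apply, ← map_mul, Ideal.Quotient.eq_zero_iff_mem] at hx
    exact Ideal.Quotient.eq_zero_iff_mem.mpr (hreg x hx)
  have hforms : (quotientForms I m).map μ ≤ quotientForms I (m + e) := by
    rintro _ ⟨_, ⟨q, hq, rfl⟩, rfl⟩
    exact ⟨f * q, add_comm e m ▸ hf.mul hq, map_mul (Ideal.Quotient.mk I) f q⟩
  have hker : (quotientForms I m).map μ ≤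
      LinearMap.ker (Ideal.Quotient.factorₐ k hIJ).toLinearMap := by
    rintro _ ⟨_, ⟨q, -, rfl⟩, rfl⟩
    exact Ideal.Quotient.eq_zero_iff_mem.mpr (J.mul_mem_right q hfJ)
  have hrank := finrank_map_add_finrank_le hforms hker
  rwa [map_factor_quotientForms, ← (Submodule.equivMapOfInjective μ hμ _).finrank_eq] at hrank

lemma idealDeg_le {E : ℕ} (h : ∀ P : Polynomial ℚ,
      (∀ᶠ m : ℕ in Filter.atTop, (hilbF k I m : ℚ) = P.eval (m : ℚ)) →
        P.natDegree.factorial * P.leadingCoeff ≤ (E : ℚ)) : idealDeg k I ≤ E := by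
  refine Nat.floor_le_of_le ?_
  rw [hilbP]
  split_ifs with hex
  · exact h _ hex.choose_spec
  · simp

lemma idealDeg_top : idealDeg k (⊤ : Ideal (MvPolynomial (Fin (n + 1)) k)) = 0 := by
  refine Nat.le_zero.mp (idealDeg_le fun P hP => ?_)
  have hroot : ∀ᶠ m : ℕ in Filter.atTop, P.IsRoot m := by
    filter_upwards [hP] with m hm
    rw [Polynomial.IsRoot, ← hm, hilbF, Module.finrank_zero_of_subsingleton, Nat.cast_zero]
  have hP₀ : P = 0 := by
    by_contra hne
    obtain ⟨m, hm, hm'⟩ := (hroot.and (tendsto_natCast_atTop_atTop.eventually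
      (Polynomial.eventually_atTop_not_isRoot P hne))).exists
    exact hm' hm
  simp [hP₀]

end HilbertFunction

section HilbertSeries

variable {k : Type*} [Field k] {n : ℕ}

/-- The generating series of the Hilbert function of `I`, with rational coefficients so that it can
be compared with the Hilbert polynomial. -/
noncomputable def hilbertSeries (k : Type*) [Field k] {n : ℕ}
    (I : Ideal (MvPolynomial (Fin (n + 1)) k)) : ℚ⟦X⟧ :=
  PowerSeries.mk fun m => (hilbF k I m : ℚ)

variable {I J : Ideal (MvPolynomial (Fin (n + 1)) k)}

lemma hilbertSeries_le_geomSeries_pow :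
    CoeffLE (hilbertSeries k I) (geomSeries ℚ ^ (n + 1)) := by
  intro m
  rw [hilbertSeries, PowerSeries.coeff_mk, coeff_geomSeries_pow]
  exact_mod_cast hilbF_le_multichoose m

lemma hilbertSeries_le_one_sub_X_pow_mul {f : MvPolynomial (Fin (n + 1)) k} {e : ℕ}
    (hf : f.IsHomogeneous e) (hIJ : I ≤ J) (hfJ : f ∈ J) (hreg : ∀ x, f * x ∈ I → x ∈ I) :
    CoeffLE (hilbertSeries k J) ((1 - PowerSeries.X ^ e) * hilbertSeries k I) := by
  intro m
  rw [sub_mul, one_mul, map_sub, PowerSeries.coeff_X_pow_mul']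
  simp only [hilbertSeries, PowerSeries.coeff_mk]
  split_ifs with hem
  · obtain ⟨m, rfl⟩ := Nat.exists_eq_add_of_le' hem
    rw [Nat.add_sub_cancel, le_sub_iff_add_le]
    exact_mod_cast hilbF_add_hilbF_le hf hIJ hfJ hreg m
  · rw [sub_zero]
    exact_mod_cast hilbF_antitone hIJ m

lemma exists_geomSeries_pow_le_hilbertSeries {P : Ideal (MvPolynomial (Fin (n + 1)) k)}
    [P.IsPrime] (hIP : I ≤ P) :
    ∃ t : ℕ, ((n + 1 : ℕ) : ℕ∞) ≤ t + P.height ∧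
      CoeffLE (geomSeries ℚ ^ t) (hilbertSeries k I) := by
  obtain ⟨ι, _, v, hv, hcard⟩ := exists_algebraicIndependent_mk_X P
  refine ⟨Fintype.card ι, hcard, fun m => ?_⟩
  rw [hilbertSeries, PowerSeries.coeff_mk, coeff_geomSeries_pow]
  exact_mod_cast (multichoose_le_hilbF hv m).trans (hilbF_antitone hIP m)

end HilbertSeries

section RegularSequence

open RingTheory.Sequence

/-- The contraction `I^c` to `R` of the ideal `I` of the `R`-algebra `A` generated by the images
of the family `f`. -/
def contractedSpan (A : Type*) {R ι : Type*} [CommRing R] [CommRing A] [Algebra R A]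
    (f : ι → R) : Ideal R :=
  (Ideal.span (Set.range fun i => algebraMap R A (f i))).comap (algebraMap R A)

lemma isWeaklyRegular_ofFn_succ_iff {A : Type*} [CommRing A] {s : ℕ} (g : Fin (s + 1) → A) :
    IsWeaklyRegular A (List.ofFn g) ↔
      IsWeaklyRegular A (List.ofFn fun i : Fin s => g i.castSucc) ∧
        ∀ x, g (Fin.last s) * x ∈ Ideal.span (Set.range fun i : Fin s => g i.castSucc) →
          x ∈ Ideal.span (Set.range fun i : Fin s => g i.castSucc) := by
  have hspan : Ideal.ofList (List.ofFn fun i : Fin s => g i.castSucc) =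
      Ideal.span (Set.range fun i : Fin s => g i.castSucc) := by
    simp only [Ideal.ofList, List.mem_ofFn, Set.range]
  rw [List.ofFn_succ_last, isWeaklyRegular_append_iff, isWeaklyRegular_singleton_iff,
    isSMulRegular_quotient_iff_mem_of_smul_mem, hspan, smul_eq_mul, Ideal.mul_top]
  rfl

variable {k : Type*} [Field k] {n : ℕ} {A : Type*} [CommRing A]
  [Algebra (MvPolynomial (Fin (n + 1)) k) A]

theorem geomSeries_pow_mul_hilbertSeries_le {s : ℕ} {f : Fin s → MvPolynomial (Fin (n + 1)) k}
    {e : Fin s → ℕ} (hfh : ∀ i, (f i).IsHomogeneous (e i))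
    (hreg : IsWeaklyRegular A (List.ofFn fun i => algebraMap _ A (f i))) :
    CoeffLE (geomSeries ℚ ^ s * hilbertSeries k (contractedSpan A f))
      (((∏ i, e i : ℕ) : ℚ⟦X⟧) * geomSeries ℚ ^ (n + 1)) := by
  induction s with
  | zero => simpa using hilbertSeries_le_geomSeries_pow
  | succ s ih =>
    obtain ⟨hinit, hlast⟩ := (isWeaklyRegular_ofFn_succ_iff _).mp hreg
    have hle : contractedSpan A (fun i : Fin s => f i.castSucc) ≤ contractedSpan A f :=
      Ideal.comap_mono (Ideal.span_mono (Set.range_comp_subset_range Fin.castSucc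
        fun i => algebraMap _ A (f i)))
    have hmem : f (Fin.last s) ∈ contractedSpan A f :=
      Ideal.subset_span (Set.mem_range_self (Fin.last s))
    have hcancel (x) (hx : f (Fin.last s) * x ∈ contractedSpan A fun i : Fin s => f i.castSucc) :
        x ∈ contractedSpan A fun i : Fin s => f i.castSucc :=
      hlast _ (by rwa [← map_mul])
    rw [Fin.prod_univ_castSucc]
    exact geomSeries_pow_succ_mul_le
      (hilbertSeries_le_one_sub_X_pow_mul (hfh (Fin.last s)) hle hmem hcancel)
      (ih (fun i => hfh i.castSucc) hinit)

theorem exists_geomSeries_pow_le_hilbertSeries_contractedSpan [IsNoetherianRing A]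
    [Algebra.HasGoingDown (MvPolynomial (Fin (n + 1)) k) A] {s : ℕ}
    {f : Fin s → MvPolynomial (Fin (n + 1)) k} (hf : contractedSpan A f ≠ ⊤) :
    ∃ t, n + 1 ≤ t + s ∧ CoeffLE (geomSeries ℚ ^ t) (hilbertSeries k (contractedSpan A f)) := by
  obtain ⟨Q, hQ⟩ := Ideal.nonempty_minimalPrimes (mt Ideal.comap_eq_top_iff.mpr hf)
  have := hQ.1.1
  have hheight : (Q.under (MvPolynomial (Fin (n + 1)) k)).height ≤ s :=
    calc _ ≤ Q.height := height_under_le Q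
      _ ≤ (Set.range fun i => algebraMap _ A (f i)).ncard :=
        Ideal.height_le_card_of_mem_minimalPrimes_span (Set.finite_range _) hQ
      _ ≤ s := by
        simpa only [Nat.card_coe_set_eq, Nat.card_fin, Nat.cast_le] using
          Finite.card_range_le fun i => algebraMap _ A (f i)
  have hle : contractedSpan A f ≤ Q.under (MvPolynomial (Fin (n + 1)) k) :=
    Ideal.comap_mono hQ.1.2
  obtain ⟨t, hdim, ht⟩ := exists_geomSeries_pow_le_hilbertSeries hle
  refine ⟨t, ?_, ht⟩
  exact_mod_cast hdim.trans (add_le_add_right hheight _)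

theorem degree_contraction_bezout_general [IsNoetherianRing A]
    [Algebra.HasGoingDown (MvPolynomial (Fin (n + 1)) k) A] {s : ℕ}
    {f : Fin s → MvPolynomial (Fin (n + 1)) k} {e : Fin s → ℕ}
    (hfh : ∀ i, (f i).IsHomogeneous (e i))
    (hreg : IsWeaklyRegular A (List.ofFn fun i => algebraMap _ A (f i))) :
    idealDeg k (contractedSpan A f) ≤ ∏ i, e i := by
  by_cases htop : contractedSpan A f = ⊤
  · rw [htop, idealDeg_top]
    exact Nat.zero_le _
  obtain ⟨t, hdim, hlower⟩ := exists_geomSeries_pow_le_hilbertSeries_contractedSpan htop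
  refine idealDeg_le fun P hP => ?_
  refine factorial_natDegree_mul_leadingCoeff_le (H := hilbertSeries k (contractedSpan A f)) ?_
    hlower hdim (geomSeries_pow_mul_hilbertSeries_le hfh hreg)
  simpa only [hilbertSeries, PowerSeries.coeff_mk] using hP

end RegularSequence

/-- Bézout-type bound for the degree of the contraction
`I^c = (f₁,…,f_s)·k[x₀,…,xₙ]_F ∩ k[x₀,…,xₙ]` of the ideal generated by a weak
regular sequence of homogeneous polynomials in the localization at `F`:
`deg I^c ≤ ∏ deg fᵢ`. -/
theorem degree_contraction_bezout {k : Type*} [Field k] {n s : ℕ} (hs : s ≤ n)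
    (F : MvPolynomial (Fin (n+1)) k) (eF : ℕ) (hFdeg : 1 ≤ eF)
    (hFh : F.IsHomogeneous eF) (hF0 : F ≠ 0)
    (f : Fin s → MvPolynomial (Fin (n+1)) k) (e : Fin s → ℕ)
    (hfh : ∀ i, (f i).IsHomogeneous (e i)) (hf0 : ∀ i, f i ≠ 0)
    (hreg : RingTheory.Sequence.IsWeaklyRegular (Localization.Away F)
      (List.ofFn fun i =>
        algebraMap (MvPolynomial (Fin (n+1)) k) (Localization.Away F) (f i))) :
    idealDeg k (Ideal.comap
        (algebraMap (MvPolynomial (Fin (n+1)) k) (Localization.Away F))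
        (Ideal.span (Set.range fun i =>
          algebraMap (MvPolynomial (Fin (n+1)) k) (Localization.Away F) (f i))))
      ≤ ∏ i, e i := by
  have := IsLocalization.isNoetherianRing (Submonoid.powers F) (Localization.Away F) inferInstance
  exact degree_contraction_bezout_general hfh hreg
end
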